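/- arXiv:1709.05025 — 2 statements merged into one kernel-verified Lean document; each statement's English description precedes it below -/
import Mathlib

section
/- The ring of invariants of the binary icosahedral group Ī acting on ℂ[X,Y] is the subalgebra generated by F₃₀, F₂₀ and F₁₂; that is, a polynomial P ∈ ℂ[X,Y] satisfies P(a₁₁X + a₁₂Y, a₂₁X + a₂₂Y) = P(X,Y) for every (a_{ij}) ∈ Ī if and only if P lies in the ℂ-subalgebra of ℂ[X,Y] generated by F₃₀, F₂₀ and F₁₂. -/
noncomputable section
open Matrix MvPolynomial

def zeta5 : ℂ := Complex.exp (2 * Real.pi * Complex.I / 5)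

def alpha : Matrix (Fin 2) (Fin 2) ℂ := -(Matrix.of ![![zeta5 ^ 3, 0], ![0, zeta5 ^ 2]])
def beta : Matrix (Fin 2) (Fin 2) ℂ := Matrix.of ![![0, 1], ![-1, 0]]
def gamma : Matrix (Fin 2) (Fin 2) ℂ :=
  (zeta5 ^ 2 - zeta5 ^ 3)⁻¹ •
    Matrix.of ![![zeta5 + zeta5⁻¹, 1], ![1, -(zeta5 + zeta5⁻¹)]]

def Ibar : Subgroup (GL (Fin 2) ℂ) :=
  Subgroup.closure {g : GL (Fin 2) ℂ |
    (g : Matrix (Fin 2) (Fin 2) ℂ) = alpha ∨ (g : Matrix (Fin 2) (Fin 2) ℂ) = beta ∨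
      (g : Matrix (Fin 2) (Fin 2) ℂ) = gamma}

/-- The action of a `2 × 2` matrix on `ℂ[X, Y]` by linear substitution of variables. -/
def act (A : Matrix (Fin 2) (Fin 2) ℂ) (P : MvPolynomial (Fin 2) ℂ) : MvPolynomial (Fin 2) ℂ :=
  aeval (fun i => C (A i 0) * X 0 + C (A i 1) * X 1) P

def F30 : MvPolynomial (Fin 2) ℂ :=
  X 0 ^ 30 + 522 * (X 0 ^ 25 * X 1 ^ 5 - X 0 ^ 5 * X 1 ^ 25)
    - 10005 * (X 0 ^ 20 * X 1 ^ 10 + X 0 ^ 10 * X 1 ^ 20) + X 1 ^ 30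

def F20 : MvPolynomial (Fin 2) ℂ :=
  X 0 ^ 20 - 228 * (X 0 ^ 15 * X 1 ^ 5 - X 0 ^ 5 * X 1 ^ 15)
    + 494 * X 0 ^ 10 * X 1 ^ 10 + X 1 ^ 20

def F12 : MvPolynomial (Fin 2) ℂ :=
  X 0 * X 1 * (X 0 ^ 10 + 11 * X 0 ^ 5 * X 1 ^ 5 - X 1 ^ 10)

/-!
Following Klein, `F12` vanishes exactly on the orbit of the twelve vertices of the icosahedron, and
`F20` and `F30` are, up to scalars, the Hessian of `F12` and the Jacobian of `F12` and `F20`, hence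
invariant along with it. A homogeneous invariant vanishing at the vertex `(1, 0)` vanishes on the
whole orbit, so it is `F12` times an invariant of smaller degree. If it does not vanish there, its
degree is a multiple of `10` by the stabiliser of the vertex, and different from `10` because the
square and the cube of an invariant of degree `10` would be multiples of `F20` and `F30`, whose
values at `(1, 1)` exclude this. Its value at the vertex is then matched by a multiple of some
`F20 ^ a * F30 ^ b`, and the difference is divisible by `F12`.
-/

section Homogeneous

variable {σ R S : Type*} [CommSemiring R]

lemma aeval_smul_of_isHomogeneous [CommSemiring S] [Algebra R S] {P : MvPolynomial σ R} {d : ℕ}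
    (hP : P.IsHomogeneous d) (r : S) (f : σ → S) : aeval (r • f) P = r ^ d * aeval f P := by
  simp only [aeval_def, eval₂_eq, Finset.mul_sum]
  refine Finset.sum_congr rfl fun m hm => ?_
  have hm : ∑ i ∈ m.support, m i = d := (hP.degree_eq_sum_deg_support hm).symm
  simp only [Pi.smul_apply, smul_eq_mul, mul_pow, Finset.prod_mul_distrib,
    Finset.prod_pow_eq_pow_sum, hm]
  ring

lemma eval_smul_of_isHomogeneous {P : MvPolynomial σ R} {d : ℕ} (hP : P.IsHomogeneous d)
    (r : R) (v : σ → R) : eval (r • v) P = r ^ d * eval v P := by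
  simpa only [aeval_eq_eval] using aeval_smul_of_isHomogeneous hP r v

lemma homogeneousComponent_add_mul {P : MvPolynomial σ R} {m : ℕ} (hP : P.IsHomogeneous m)
    (Q : MvPolynomial σ R) (n : ℕ) :
    homogeneousComponent (m + n) (P * Q) = P * homogeneousComponent n Q := by
  induction Q using MvPolynomial.induction_on' with
  | monomial k a =>
    have hk : (monomial k a).IsHomogeneous k.degree := isHomogeneous_monomial a rfl
    simp only [homogeneousComponent_of_mem hk, homogeneousComponent_of_mem (hP.mul hk),
      add_right_inj, mul_ite, mul_zero]
  | add Q₁ Q₂ h₁ h₂ => simp only [mul_add, map_add, h₁, h₂]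

lemma exists_isHomogeneous_cofactor [IsCancelAdd R] [IsCancelMulZero R]
    {P Q : MvPolynomial σ R} {m d : ℕ} (hP : P.IsHomogeneous m)
    (hPQ : (P * Q).IsHomogeneous d) (h₀ : P * Q ≠ 0) :
    ∃ e, d = m + e ∧ Q.IsHomogeneous e := by
  obtain ⟨hP₀, hQ₀⟩ := mul_ne_zero_iff.1 h₀
  have hd : d = m + Q.totalDegree := by
    rw [← hPQ.totalDegree h₀, totalDegree_mul_of_isDomain hP₀ hQ₀, hP.totalDegree hP₀]
  have hQ : homogeneousComponent Q.totalDegree Q = Q := mul_left_cancel₀ hP₀ <| by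
    rw [← homogeneousComponent_add_mul hP, ← hd, homogeneousComponent_eq_self hPQ]
  have hQhom := homogeneousComponent_isHomogeneous Q.totalDegree Q
  exact ⟨Q.totalDegree, hd, by rwa [hQ] at hQhom⟩

end Homogeneous

section LinSubst

variable {σ R : Type*} [Fintype σ] [CommSemiring R]

/-- The action of a square matrix `A` on polynomials by linear substitution of variables:
`X i` is sent to the `i`-th linear form `∑ j, A i j * X j`. -/
def linSubst (A : Matrix σ σ R) : MvPolynomial σ R →ₐ[R] MvPolynomial σ R :=
  aeval A.toMvPolynomial

lemma linSubst_X (A : Matrix σ σ R) (i : σ) : linSubst A (X i) = ∑ j, C (A i j) * X j := by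
  simp only [linSubst, aeval_X, toMvPolynomial, C_mul_X_eq_monomial]

lemma linSubst_one [DecidableEq σ] (P : MvPolynomial σ R) : linSubst (1 : Matrix σ σ R) P = P := by
  rw [linSubst, toMvPolynomial_one, aeval_X_left_apply]

lemma linSubst_mul (A B : Matrix σ σ R) (P : MvPolynomial σ R) :
    linSubst (A * B) P = linSubst B (linSubst A P) := by
  simp only [linSubst, aeval_eq_bind₁, bind₁_bind₁, ← toMvPolynomial_mul]

lemma eval_linSubst (A : Matrix σ σ R) (P : MvPolynomial σ R) (v : σ → R) :
    eval v (linSubst A P) = eval (A *ᵥ v) P := by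
  have hA : (fun i => eval v (A.toMvPolynomial i)) = A *ᵥ v :=
    funext (A.toMvPolynomial_eval_eq_apply · v)
  rw [← hA]
  exact aeval_bind₁ v A.toMvPolynomial P

lemma isHomogeneous_linSubst {P : MvPolynomial σ R} {d : ℕ} (hP : P.IsHomogeneous d)
    (A : Matrix σ σ R) : (linSubst A P).IsHomogeneous d := by
  simpa only [one_mul, linSubst] using hP.aeval A.toMvPolynomial A.toMvPolynomial_isHomogeneous

lemma homogeneousComponent_linSubst (A : Matrix σ σ R) (P : MvPolynomial σ R) (n : ℕ) :
    homogeneousComponent n (linSubst A P) = linSubst A (homogeneousComponent n P) := by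
  induction P using MvPolynomial.induction_on' with
  | monomial m a =>
    have hm : (monomial m a).IsHomogeneous m.degree := isHomogeneous_monomial a rfl
    rw [homogeneousComponent_of_mem hm, homogeneousComponent_of_mem (isHomogeneous_linSubst hm A),
      apply_ite (linSubst A), map_zero]
  | add P Q hP hQ => simp only [map_add, hP, hQ]

lemma pderiv_linSubst (A : Matrix σ σ R) (P : MvPolynomial σ R) (j : σ) :
    pderiv j (linSubst A P) = ∑ i, C (A i j) * linSubst A (pderiv i P) := by
  classical
  have pderiv_linSubst_X (k : σ) : pderiv j (linSubst A (X k)) = C (A k j) := by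
    simp [linSubst_X, pderiv_X, Pi.single_apply]
  induction P using MvPolynomial.induction_on with
  | C a => simp [linSubst]
  | add P Q hP hQ => simp only [map_add, hP, hQ, mul_add, Finset.sum_add_distrib]
  | mul_X P k hP =>
    have sum_pderiv_X : ∑ i, C (A i j) * linSubst A (pderiv i (X k)) = C (A k j) := by
      simp [pderiv_X, Pi.single_apply, apply_ite (linSubst A)]
    simp only [map_mul, Derivation.leibniz, hP, pderiv_linSubst_X, ← sum_pderiv_X, smul_eq_mul,
      map_add, mul_add, Finset.sum_add_distrib, Finset.mul_sum, mul_left_comm]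

end LinSubst

section Invariants

variable {σ R : Type*} [Fintype σ] [DecidableEq σ] [CommSemiring R]

/-- The algebra of polynomials invariant under every linear substitution from the group `G`. -/
def invariants (G : Subgroup (GL σ R)) : Subalgebra R (MvPolynomial σ R) :=
  ⨅ g ∈ G, AlgHom.equalizer (linSubst (g : Matrix σ σ R)) (AlgHom.id R _)

lemma mem_invariants {G : Subgroup (GL σ R)} {P : MvPolynomial σ R} :
    P ∈ invariants G ↔ ∀ g ∈ G, linSubst (g : Matrix σ σ R) P = P := by
  simp only [invariants, Algebra.mem_iInf, AlgHom.mem_equalizer, AlgHom.id_apply]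

lemma mem_invariants_closure {s : Set (GL σ R)} {P : MvPolynomial σ R} :
    P ∈ invariants (Subgroup.closure s) ↔ ∀ g ∈ s, linSubst (g : Matrix σ σ R) P = P := by
  refine mem_invariants.trans
    ⟨fun h g hg => h g (Subgroup.subset_closure hg), fun h g hg => ?_⟩
  induction hg using Subgroup.closure_induction with
  | mem g hg => exact h g hg
  | one => exact linSubst_one P
  | mul g₁ g₂ _ _ h₁ h₂ => rw [Units.val_mul, linSubst_mul, h₁, h₂]
  | inv g _ hg =>
    nth_rewrite 1 [← hg]
    rw [← linSubst_mul, ← Units.val_mul, mul_inv_cancel, Units.val_one, linSubst_one]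

variable {G : Subgroup (GL σ R)} {P Q : MvPolynomial σ R}

lemma homogeneousComponent_mem_invariants (hP : P ∈ invariants G) (n : ℕ) :
    homogeneousComponent n P ∈ invariants G :=
  mem_invariants.2 fun g hg => by
    rw [← homogeneousComponent_linSubst, mem_invariants.1 hP g hg]

lemma mem_invariants_of_mul_mem [IsCancelAdd R] [IsCancelMulZero R]
    (hP : P ∈ invariants G) (hP₀ : P ≠ 0) (hPQ : P * Q ∈ invariants G) : Q ∈ invariants G :=
  mem_invariants.2 fun g hg => mul_left_cancel₀ hP₀ <| by
    simpa only [map_mul, mem_invariants.1 hP g hg] using mem_invariants.1 hPQ g hg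

end Invariants

section Covariants

lemma pderiv_ofNat {σ R : Type*} [CommSemiring R] (i : σ) (n : ℕ) [n.AtLeastTwo] :
    pderiv i (ofNat(n) : MvPolynomial σ R) = 0 :=
  (pderiv i).map_natCast n

variable {R : Type*} [CommRing R]

/-- The Jacobian determinant `∂(P, Q) / ∂(X, Y)` of two binary forms; this is a covariant. -/
def jacobian (P Q : MvPolynomial (Fin 2) R) : MvPolynomial (Fin 2) R :=
  pderiv 0 P * pderiv 1 Q - pderiv 1 P * pderiv 0 Q

/-- The Hessian determinant of a binary form. -/
def hessian (P : MvPolynomial (Fin 2) R) : MvPolynomial (Fin 2) R :=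
  jacobian (pderiv 0 P) (pderiv 1 P)

lemma isHomogeneous_jacobian {P Q : MvPolynomial (Fin 2) R} {m n : ℕ}
    (hP : P.IsHomogeneous m) (hQ : Q.IsHomogeneous n) :
    (jacobian P Q).IsHomogeneous (m - 1 + (n - 1)) :=
  (hP.pderiv.mul hQ.pderiv).sub (hP.pderiv.mul hQ.pderiv)

lemma isHomogeneous_hessian {P : MvPolynomial (Fin 2) R} {m : ℕ} (hP : P.IsHomogeneous m) :
    (hessian P).IsHomogeneous (m - 2 + (m - 2)) :=
  isHomogeneous_jacobian hP.pderiv hP.pderiv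

lemma jacobian_linSubst (A : Matrix (Fin 2) (Fin 2) R) (P Q : MvPolynomial (Fin 2) R) :
    jacobian (linSubst A P) (linSubst A Q) = C A.det * linSubst A (jacobian P Q) := by
  simp only [jacobian, pderiv_linSubst, Fin.sum_univ_two, det_fin_two, map_sub, map_mul]
  ring

lemma hessian_linSubst (A : Matrix (Fin 2) (Fin 2) R) (P : MvPolynomial (Fin 2) R) :
    hessian (linSubst A P) = C (A.det ^ 2) * linSubst A (hessian P) := by
  have jacobian_linComb (a b c d : R) (P Q : MvPolynomial (Fin 2) R) :
      jacobian (C a * P + C b * Q) (C c * P + C d * Q) = C (a * d - b * c) * jacobian P Q := by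
    simp only [jacobian, map_add, map_sub, map_mul, pderiv_C_mul]
    ring
  rw [hessian, pderiv_linSubst, pderiv_linSubst, Fin.sum_univ_two, Fin.sum_univ_two,
    jacobian_linComb, jacobian_linSubst, ← mul_assoc, ← C_mul, hessian, sq, det_fin_two]
  ring_nf

variable {G : Subgroup (GL (Fin 2) R)} {P Q : MvPolynomial (Fin 2) R}

lemma jacobian_mem_invariants (hG : G ≤ GeneralLinearGroup.det.ker) (hP : P ∈ invariants G)
    (hQ : Q ∈ invariants G) : jacobian P Q ∈ invariants G :=
  mem_invariants.2 fun g hg => by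
    have hdet : (g : Matrix (Fin 2) (Fin 2) R).det = 1 := congrArg Units.val (hG hg)
    have h := jacobian_linSubst (g : Matrix (Fin 2) (Fin 2) R) P Q
    rwa [mem_invariants.1 hP g hg, mem_invariants.1 hQ g hg, hdet, C_1, one_mul, eq_comm] at h

lemma hessian_mem_invariants (hG : G ≤ GeneralLinearGroup.det.ker) (hP : P ∈ invariants G) :
    hessian P ∈ invariants G :=
  mem_invariants.2 fun g hg => by
    have hdet : (g : Matrix (Fin 2) (Fin 2) R).det = 1 := congrArg Units.val (hG hg)
    have h := hessian_linSubst (g : Matrix (Fin 2) (Fin 2) R) P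
    rwa [mem_invariants.1 hP g hg, hdet, one_pow, C_1, one_mul, eq_comm] at h

end Covariants

section BinaryForms

lemma isRelPrime_linearComb {S : Type*} [CommRing S] {x y a b c d : S}
    (hxy : IsRelPrime x y) (hdet : IsUnit (a * d - b * c)) :
    IsRelPrime (a * x + b * y) (c * x + d * y) := by
  intro z hz₁ hz₂
  refine hxy (hdet.dvd_mul_left.1 ?_) (hdet.dvd_mul_left.1 ?_)
  · have h : z ∣ d * (a * x + b * y) - b * (c * x + d * y) :=
      (hz₁.mul_left d).sub (hz₂.mul_left b)
    convert h using 1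
    ring
  · have h : z ∣ a * (c * x + d * y) - c * (a * x + b * y) :=
      (hz₂.mul_left a).sub (hz₁.mul_left c)
    convert h using 1
    ring

lemma isRelPrime_X_X {σ R : Type*} [CommRing R] [IsDomain R] {i j : σ} (hij : i ≠ j) :
    IsRelPrime (X i : MvPolynomial σ R) (X j) := by
  rw [X_prime.irreducible.isRelPrime_iff_not_dvd, X_dvd_X]
  exact hij

lemma linearForm_dvd_C_pow_mul {R : Type*} [CommRing R] {P : MvPolynomial (Fin 2) R} {d : ℕ}
    (hP : P.IsHomogeneous d) {v : Fin 2 → R} (hv : eval v P = 0) (i : Fin 2) :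
    C (v 1) * X 0 - C (v 0) * X 1 ∣ C (v i) ^ d * P := by
  set I := Ideal.span {(C (v 1) * X 0 - C (v 0) * X 1 : MvPolynomial (Fin 2) R)}
  let π := Ideal.Quotient.mkₐ R I
  have hπ : π (C (v 1) * X 0) = π (C (v 0) * X 1) :=
    Ideal.Quotient.eq.2 (Ideal.mem_span_singleton_self _)
  -- Modulo the linear form, the vector of variables is proportional to `v`.
  have hscale : π (C (v i)) • (fun j => π (X j)) = π (X i) • (algebraMap R _ ∘ v) := by
    have hswap (j : Fin 2) : π (C (v i) * X j) = π (C (v j) * X i) := by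
      fin_cases i <;> fin_cases j
      exacts [rfl, hπ.symm, hπ, rfl]
    funext j
    rw [Pi.smul_apply, smul_eq_mul, ← map_mul, hswap j, map_mul, mul_comm]
    rfl
  rw [← Ideal.mem_span_singleton, ← Ideal.Quotient.eq_zero_iff_mem]
  calc π (C (v i) ^ d * P) = π (C (v i)) ^ d * aeval (fun j => π (X j)) P := by
        rw [map_mul, map_pow, ← comp_aeval_apply, aeval_X_left_apply]
    _ = π (X i) ^ d * aeval (algebraMap R _ ∘ v) P := by
        rw [← aeval_smul_of_isHomogeneous hP, hscale, aeval_smul_of_isHomogeneous hP]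
    _ = 0 := by rw [aeval_algebraMap_apply, aeval_eq_eval, hv, map_zero, mul_zero]

variable {K : Type*} [Field K] {P : MvPolynomial (Fin 2) K} {d : ℕ}

lemma isRelPrime_binomialForm {a b c d : K} (hdet : a * d - b * c ≠ 0) (n : ℕ) :
    IsRelPrime (C a * X 0 ^ n - C b * X 1 ^ n : MvPolynomial (Fin 2) K)
      (C c * X 0 ^ n - C d * X 1 ^ n) := by
  have hX : IsRelPrime (X 0 ^ n : MvPolynomial (Fin 2) K) (X 1 ^ n) :=
    (isRelPrime_X_X zero_ne_one).pow
  have hunit : IsUnit (C a * -C d - -C b * C c : MvPolynomial (Fin 2) K) := by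
    convert ((IsUnit.mk0 _ hdet).neg.map C) using 1
    simp only [map_neg, map_sub, map_mul]
    ring
  simpa only [neg_mul, ← sub_eq_add_neg] using isRelPrime_linearComb hX hunit

lemma isRelPrime_X_binomialForm {a b : K} (ha : a ≠ 0) (hb : b ≠ 0) {n : ℕ} (hn : n ≠ 0)
    (i : Fin 2) :
    IsRelPrime (X i : MvPolynomial (Fin 2) K) (C a * X 0 ^ n - C b * X 1 ^ n) := by
  refine IsRelPrime.of_dvd_left ?_ (dvd_pow_self (X i) hn)
  fin_cases i
  · simpa using isRelPrime_binomialForm (a := 1) (b := 0) (c := a) (d := b) (by simpa) n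
  · simpa using isRelPrime_binomialForm (a := 0) (b := -1) (c := a) (d := b) (by simpa) n

lemma linearForm_dvd_of_eval_eq_zero (hP : P.IsHomogeneous d) {v : Fin 2 → K} (hv₀ : v ≠ 0)
    (hv : eval v P = 0) : C (v 1) * X 0 - C (v 0) * X 1 ∣ P := by
  obtain ⟨i, hi⟩ := Function.ne_iff.1 hv₀
  have hunit : IsUnit (C (v i) ^ d : MvPolynomial (Fin 2) K) := ((IsUnit.mk0 _ hi).map C).pow d
  exact hunit.dvd_mul_left.1 (linearForm_dvd_C_pow_mul hP hv i)

lemma binomialForm_dvd_of_eval_eq_zero (hP : P.IsHomogeneous d) {n : ℕ} (hn : 0 < n) {ζ : K}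
    (hζ : IsPrimitiveRoot ζ n) {a b : K} (ha : a ≠ 0) (hb : b ≠ 0)
    (hroots : ∀ j, eval ![ζ ^ j * a, b] P = 0) :
    C (b ^ n) * X 0 ^ n - C (a ^ n) * X 1 ^ n ∣ P := by
  have : NeZero n := ⟨hn.ne'⟩
  have hCζ : IsPrimitiveRoot (C ζ : MvPolynomial (Fin 2) K) n :=
    hζ.map_of_injective (C_injective _ _)
  have eq_C_of_mem {ξ : MvPolynomial (Fin 2) K} (hξ : ξ ∈ Polynomial.nthRootsFinset n 1) :
      ∃ j, C (ζ ^ j) = ξ := by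
    obtain ⟨j, -, hj⟩ := hCζ.eq_pow_of_pow_eq_one ((Polynomial.mem_nthRootsFinset hn 1).1 hξ)
    exact ⟨j, by rw [C_pow, hj]⟩
  rw [C_pow, C_pow, ← mul_pow, ← mul_pow, hCζ.pow_sub_pow_eq_prod_sub_mul _ _ hn]
  refine Finset.prod_dvd_of_isRelPrime (fun ξ hξ η hη hne => ?_) fun ξ hξ => ?_
  · obtain ⟨i, rfl⟩ := eq_C_of_mem hξ
    obtain ⟨j, rfl⟩ := eq_C_of_mem hη
    have hij : ζ ^ i ≠ ζ ^ j := fun h => hne (congrArg C h)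
    have hdet : b * (ζ ^ j * a) - ζ ^ i * a * b ≠ 0 := by
      rw [show b * (ζ ^ j * a) - ζ ^ i * a * b = (ζ ^ j - ζ ^ i) * (a * b) by ring]
      exact mul_ne_zero (sub_ne_zero.2 hij.symm) (mul_ne_zero ha hb)
    simpa only [Function.onFun, pow_one, C_mul, mul_assoc] using isRelPrime_binomialForm hdet 1
  · obtain ⟨j, rfl⟩ := eq_C_of_mem hξ
    have hv₀ : ![ζ ^ j * a, b] ≠ 0 := fun h => hb (congrFun h 1)
    simpa [mul_assoc] using linearForm_dvd_of_eval_eq_zero hP hv₀ (hroots j)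

end BinaryForms

section Icosahedral

lemma isPrimitiveRoot_zeta5 : IsPrimitiveRoot zeta5 5 := by
  simpa only [zeta5, Nat.cast_ofNat] using Complex.isPrimitiveRoot_exp 5 (by norm_num)

lemma zeta5_pow_five : zeta5 ^ 5 = 1 :=
  isPrimitiveRoot_zeta5.pow_eq_one

/-- The number `ζ₅ + ζ₅⁻¹ = (√5 - 1) / 2`, the inverse of the golden ratio: the vertices of the
icosahedron on the Riemann sphere are `∞`, `0`, `ζ₅ ^ j * τ` and `-ζ₅ ^ j / τ`. -/
def tau : ℂ := zeta5 + zeta5⁻¹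

lemma inv_zeta5 : zeta5⁻¹ = zeta5 ^ 4 :=
  inv_eq_of_mul_eq_one_left (by rw [← pow_succ, zeta5_pow_five])

lemma geom_sum_zeta5 : 1 + zeta5 + zeta5 ^ 2 + zeta5 ^ 3 + zeta5 ^ 4 = 0 := by
  simpa [Finset.sum_range_succ] using isPrimitiveRoot_zeta5.geom_sum_eq_zero (by norm_num)

lemma tau_sq : tau ^ 2 = 1 - tau := by
  rw [tau, inv_zeta5]
  linear_combination geom_sum_zeta5 + (2 + zeta5 ^ 3) * zeta5_pow_five

lemma zeta5_sq_sub_cube_sq : (zeta5 ^ 2 - zeta5 ^ 3) ^ 2 = tau - 2 := by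
  rw [tau, inv_zeta5]
  linear_combination (zeta5 - 2) * zeta5_pow_five

lemma zeta5_sq_sub_cube_ne_zero : zeta5 ^ 2 - zeta5 ^ 3 ≠ 0 := fun h => by
  have h₂ : tau = 2 := by linear_combination -zeta5_sq_sub_cube_sq + (zeta5 ^ 2 - zeta5 ^ 3) * h
  have h₃ := tau_sq
  norm_num [h₂] at h₃

lemma tau_ne_zero : tau ≠ 0 := fun h => by
  simpa [h] using tau_sq

lemma tau_pow_five : tau ^ 5 = 5 * tau - 3 := by
  linear_combination (tau ^ 3 - tau ^ 2 + 2 * tau - 3) * tau_sq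

lemma one_sub_tau_pow_ten : 1 - tau ^ 10 = 11 * tau ^ 5 := by
  linear_combination (-(tau ^ 5) - 5 * tau - 8) * tau_pow_five - 25 * tau_sq

lemma tau_pow_ten_add_one_ne_zero : tau ^ 10 + 1 ≠ 0 := fun h => by
  have h₁ : 11 * tau = 7 := by
    linear_combination -(1 / 5) * (h + one_sub_tau_pow_ten + 11 * tau_pow_five)
  have h₂ : (5 : ℂ) = 0 := by linear_combination 121 * tau_sq - (11 * tau + 18) * h₁
  norm_num at h₂

lemma alpha_mulVec (x y : ℂ) : alpha *ᵥ ![x, y] = (-zeta5 ^ 2) • ![zeta5 * x, y] := by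
  ext i
  fin_cases i <;> simp [alpha, pow_succ, mul_assoc, mul_comm]

lemma beta_mulVec (x y : ℂ) : beta *ᵥ ![x, y] = ![y, -x] := by
  ext i
  fin_cases i <;> simp [beta]

lemma gamma_mulVec (x y : ℂ) :
    gamma *ᵥ ![x, y] = (zeta5 ^ 2 - zeta5 ^ 3)⁻¹ • ![tau * x + y, x - tau * y] := by
  rw [gamma, ← tau, smul_mulVec]
  congr 1
  ext i
  fin_cases i <;> simp [mul_comm, sub_eq_add_neg]

lemma det_alpha : alpha.det = 1 := by
  rw [alpha, det_neg, Fintype.card_fin, det_fin_two_of]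
  linear_combination zeta5_pow_five

lemma det_beta : beta.det = 1 := by
  simp [beta, det_fin_two]

lemma det_gamma : gamma.det = 1 := by
  rw [gamma, ← tau, det_smul, Fintype.card_fin, inv_pow, zeta5_sq_sub_cube_sq, det_fin_two_of]
  refine (inv_mul_eq_one₀ ?_).2 ?_
  · rw [← zeta5_sq_sub_cube_sq]
    exact pow_ne_zero 2 zeta5_sq_sub_cube_ne_zero
  · linear_combination tau_sq

lemma Ibar_le_ker_det : Ibar ≤ GeneralLinearGroup.det.ker := by
  refine (Subgroup.closure_le _).2 fun g hg => Units.ext ?_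
  rcases hg with h | h | h
  · simp [h, det_alpha]
  · simp [h, det_beta]
  · simp [h, det_gamma]

lemma mem_invariants_Ibar {P : MvPolynomial (Fin 2) ℂ} :
    P ∈ invariants Ibar ↔
      linSubst alpha P = P ∧ linSubst beta P = P ∧ linSubst gamma P = P := by
  have exists_coe_eq {A : Matrix (Fin 2) (Fin 2) ℂ} (hA : A.det = 1) :
      ∃ g : GL (Fin 2) ℂ, (g : Matrix (Fin 2) (Fin 2) ℂ) = A :=
    (isUnit_iff_isUnit_det A).2 (hA ▸ isUnit_one)
  obtain ⟨a, ha⟩ := exists_coe_eq det_alpha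
  obtain ⟨b, hb⟩ := exists_coe_eq det_beta
  obtain ⟨c, hc⟩ := exists_coe_eq det_gamma
  rw [Ibar, mem_invariants_closure, ← ha, ← hb, ← hc]
  refine ⟨fun h => ⟨h a (.inl rfl), h b (.inr (.inl rfl)), h c (.inr (.inr rfl))⟩, ?_⟩
  rintro ⟨h₁, h₂, h₃⟩ g (hg | hg | hg)
  · rw [hg, h₁]
  · rw [hg, h₂]
  · rw [hg, h₃]

lemma act_eq_linSubst (A : Matrix (Fin 2) (Fin 2) ℂ) (P : MvPolynomial (Fin 2) ℂ) :
    act A P = linSubst A P := by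
  have h : A.toMvPolynomial = fun i => C (A i 0) * X 0 + C (A i 1) * X 1 := funext fun i => by
    rw [toMvPolynomial, Fin.sum_univ_two, C_mul_X_eq_monomial, C_mul_X_eq_monomial]
  rw [act, linSubst, h]

lemma isHomogeneous_F12 : F12.IsHomogeneous 12 := by
  have hX (i : Fin 2) (n : ℕ) : (X i ^ n : MvPolynomial (Fin 2) ℂ).IsHomogeneous n :=
    isHomogeneous_X_pow i n
  refine ((isHomogeneous_X ℂ 0).mul (isHomogeneous_X ℂ 1)).mul (n := 10)
    (((hX 0 10).add ?_).sub (hX 1 10))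
  exact ((hX 0 5).C_mul 11).mul (hX 1 5)

lemma eval_F12 (x y : ℂ) : eval ![x, y] F12 = x * y * (x ^ 10 + 11 * x ^ 5 * y ^ 5 - y ^ 10) := by
  simp [F12]

lemma hessian_F12 : hessian F12 = (-121 : ℂ) • F20 := by
  simp only [smul_eq_C_mul, map_neg, map_ofNat, hessian, jacobian, F12, F20, Derivation.leibniz,
    map_sub, map_add, Derivation.leibniz_pow, Nat.add_one_sub_one, pderiv_X, Pi.single_eq_same,
    smul_eq_mul, mul_one, nsmul_eq_mul, Nat.cast_ofNat, ne_eq, one_ne_zero, not_false_eq_true,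
    Pi.single_eq_of_ne, mul_zero, pderiv_ofNat, add_zero, zero_add, sub_zero, zero_ne_one]
  ring

lemma jacobian_F12_F20 : jacobian F12 F20 = (-20 : ℂ) • F30 := by
  simp only [smul_eq_C_mul, map_neg, map_ofNat, jacobian, F12, F20, F30, Derivation.leibniz,
    map_sub, map_add, Derivation.leibniz_pow, Nat.add_one_sub_one, pderiv_X, Pi.single_eq_same,
    smul_eq_mul, mul_one, nsmul_eq_mul, Nat.cast_ofNat, ne_eq, one_ne_zero, not_false_eq_true,
    Pi.single_eq_of_ne, mul_zero, pderiv_ofNat, add_zero, zero_add, sub_zero, zero_ne_one]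
  ring

lemma eval_F12_gamma (x y : ℂ) :
    eval ![tau * x + y, x - tau * y] F12 = (tau - 2) ^ 6 * eval ![x, y] F12 := by
  -- In terms of `x * y` and `x ^ 2 - y ^ 2` the substitution is linear, up to the factor `tau`.
  have eval_eq (x y : ℂ) : eval ![x, y] F12 = x * y * ((x ^ 2 - y ^ 2) ^ 5
      + 5 * (x ^ 2 - y ^ 2) ^ 3 * (x * y) ^ 2 + 5 * (x ^ 2 - y ^ 2) * (x * y) ^ 4
      + 11 * (x * y) ^ 5) := by
    rw [eval_F12]
    ring
  have hprod : (tau * x + y) * (x - tau * y) = tau * (x * y + (x ^ 2 - y ^ 2)) := by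
    linear_combination -(x * y) * tau_sq
  have hsub : (tau * x + y) ^ 2 - (x - tau * y) ^ 2 =
      tau * (4 * (x * y) - (x ^ 2 - y ^ 2)) := by
    linear_combination (x ^ 2 - y ^ 2) * tau_sq
  have htau : (tau - 2) ^ 2 = 5 * tau ^ 2 := by linear_combination -4 * tau_sq
  rw [eval_eq, eval_eq, hprod, hsub, pow_mul _ 2 3, htau]
  ring

lemma F12_mem_invariants : F12 ∈ invariants Ibar := by
  have linSubst_eq {A : Matrix (Fin 2) (Fin 2) ℂ}
      (hA : ∀ x y, eval (A *ᵥ ![x, y]) F12 = eval ![x, y] F12) : linSubst A F12 = F12 := by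
    refine MvPolynomial.funext fun v => ?_
    rw [eval_linSubst, ← FinVec.etaExpand_eq v]
    exact hA (v 0) (v 1)
  refine mem_invariants_Ibar.2 ⟨linSubst_eq fun x y => ?_, linSubst_eq fun x y => ?_,
    linSubst_eq fun x y => ?_⟩
  · rw [alpha_mulVec, eval_smul_of_isHomogeneous isHomogeneous_F12, eval_F12, eval_F12]
    have hscale : (-zeta5 ^ 2) ^ 12 * zeta5 = 1 := by
      rw [neg_pow, ← pow_mul, mul_assoc, ← pow_succ, pow_mul zeta5 5 5, zeta5_pow_five]
      norm_num
    have hpow₅ : (zeta5 * x) ^ 5 = x ^ 5 := by rw [mul_pow, zeta5_pow_five, one_mul]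
    have hpow₁₀ : (zeta5 * x) ^ 10 = x ^ 10 := by rw [pow_mul _ 5 2, hpow₅, ← pow_mul]
    rw [hpow₅, hpow₁₀]
    linear_combination x * y * (x ^ 10 + 11 * x ^ 5 * y ^ 5 - y ^ 10) * hscale
  · rw [beta_mulVec, eval_F12, eval_F12]
    ring
  · have hscale : (zeta5 ^ 2 - zeta5 ^ 3)⁻¹ ^ 12 * (tau - 2) ^ 6 = 1 := by
      rw [← zeta5_sq_sub_cube_sq, ← pow_mul, ← mul_pow,
        inv_mul_cancel₀ zeta5_sq_sub_cube_ne_zero, one_pow]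
    rw [gamma_mulVec, eval_smul_of_isHomogeneous isHomogeneous_F12, eval_F12_gamma, ← mul_assoc,
      hscale, one_mul]

lemma F20_mem_invariants : F20 ∈ invariants Ibar := by
  have h := hessian_mem_invariants Ibar_le_ker_det F12_mem_invariants
  rw [hessian_F12] at h
  exact ((invariants Ibar).toSubmodule.smul_mem_iff (by norm_num)).1 h

lemma F30_mem_invariants : F30 ∈ invariants Ibar := by
  have h := jacobian_mem_invariants Ibar_le_ker_det F12_mem_invariants F20_mem_invariants
  rw [jacobian_F12_F20] at h
  exact ((invariants Ibar).toSubmodule.smul_mem_iff (by norm_num)).1 h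

lemma isHomogeneous_F20 : F20.IsHomogeneous 20 := by
  have h := isHomogeneous_hessian isHomogeneous_F12
  rw [hessian_F12] at h
  exact ((homogeneousSubmodule (Fin 2) ℂ 20).smul_mem_iff (by norm_num)).1 h

lemma isHomogeneous_F30 : F30.IsHomogeneous 30 := by
  have h := isHomogeneous_jacobian isHomogeneous_F12 isHomogeneous_F20
  rw [jacobian_F12_F20] at h
  exact ((homogeneousSubmodule (Fin 2) ℂ 30).smul_mem_iff (by norm_num)).1 h

variable {P M : MvPolynomial (Fin 2) ℂ} {d : ℕ}

lemma eval_zeta5_pow_mul_eq_zero (hP : P ∈ invariants Ibar) (hd : P.IsHomogeneous d)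
    {x y : ℂ} (h : eval ![x, y] P = 0) (j : ℕ) : eval ![zeta5 ^ j * x, y] P = 0 := by
  induction j with
  | zero => rwa [pow_zero, one_mul]
  | succ j ih =>
    have hα := eval_linSubst alpha P ![zeta5 ^ j * x, y]
    rw [(mem_invariants_Ibar.1 hP).1, alpha_mulVec, eval_smul_of_isHomogeneous hd, ih, eq_comm,
      ← mul_assoc, ← pow_succ'] at hα
    have hζ : -zeta5 ^ 2 ≠ 0 :=
      neg_ne_zero.2 (pow_ne_zero 2 (isPrimitiveRoot_zeta5.ne_zero (by norm_num)))
    exact (mul_eq_zero_iff_left (pow_ne_zero d hζ)).1 hα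

lemma eval_beta_eq_zero (hP : P ∈ invariants Ibar) {x y : ℂ} (h : eval ![x, y] P = 0) :
    eval ![y, -x] P = 0 := by
  rw [← beta_mulVec, ← eval_linSubst, (mem_invariants_Ibar.1 hP).2.1, h]

lemma eval_gamma_eq_zero (hP : P ∈ invariants Ibar) (hd : P.IsHomogeneous d) {x y : ℂ}
    (h : eval ![x, y] P = 0) : eval ![tau * x + y, x - tau * y] P = 0 := by
  have hγ := eval_linSubst gamma P ![x, y]
  rw [(mem_invariants_Ibar.1 hP).2.2, gamma_mulVec, eval_smul_of_isHomogeneous hd, h, eq_comm] at hγ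
  exact (mul_eq_zero_iff_left (pow_ne_zero d (inv_ne_zero zeta5_sq_sub_cube_ne_zero))).1 hγ

lemma C_tau_pow_five_mul_F12 :
    C (tau ^ 5) * F12 = X 0 * X 1 * ((C (1 ^ 5) * X 0 ^ 5 - C (tau ^ 5) * X 1 ^ 5) *
      (C (tau ^ 5) * X 0 ^ 5 - C ((-1) ^ 5) * X 1 ^ 5)) := by
  have h : (1 - C tau ^ 10 : MvPolynomial (Fin 2) ℂ) = 11 * C tau ^ 5 := by
    simpa only [map_sub, map_mul, map_pow, map_ofNat, map_one] using
      congrArg (C : ℂ → MvPolynomial (Fin 2) ℂ) one_sub_tau_pow_ten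
  simp only [F12, C_pow, C_neg, C_1]
  linear_combination -(X 0 ^ 6 * X 1 ^ 6) * h

lemma F12_dvd_of_eval_vertex_eq_zero (hP : P ∈ invariants Ibar) (hd : P.IsHomogeneous d)
    (h : eval ![1, 0] P = 0) : F12 ∣ P := by
  have h₀ : eval ![0, -1] P = 0 := eval_beta_eq_zero hP h
  have hτ : eval ![tau, 1] P = 0 := by simpa using eval_gamma_eq_zero hP hd h
  have hτ' : eval ![-1, tau] P = 0 := by simpa using eval_gamma_eq_zero hP hd h₀
  have hX : X 0 ∣ P := by
    simpa using linearForm_dvd_of_eval_eq_zero hd (fun hv => by simpa using congrFun hv 1) h₀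
  have hY : X 1 ∣ P := by
    simpa using linearForm_dvd_of_eval_eq_zero hd (fun hv => by simpa using congrFun hv 0) h
  have hA : C (1 ^ 5) * X 0 ^ 5 - C (tau ^ 5) * X 1 ^ 5 ∣ P :=
    binomialForm_dvd_of_eval_eq_zero hd (by norm_num) isPrimitiveRoot_zeta5 tau_ne_zero
      one_ne_zero (eval_zeta5_pow_mul_eq_zero hP hd hτ)
  have hB : C (tau ^ 5) * X 0 ^ 5 - C ((-1) ^ 5) * X 1 ^ 5 ∣ P :=
    binomialForm_dvd_of_eval_eq_zero hd (by norm_num) isPrimitiveRoot_zeta5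
      (neg_ne_zero.2 one_ne_zero) tau_ne_zero (eval_zeta5_pow_mul_eq_zero hP hd hτ')
  have hXY : IsRelPrime (X 0 : MvPolynomial (Fin 2) ℂ) (X 1) := isRelPrime_X_X zero_ne_one
  have hAB := isRelPrime_binomialForm (a := 1 ^ 5) (b := tau ^ 5) (c := tau ^ 5) (d := (-1) ^ 5)
    (fun h => tau_pow_ten_add_one_ne_zero (by linear_combination -h)) 5
  have hXA (i : Fin 2) := isRelPrime_X_binomialForm (pow_ne_zero 5 one_ne_zero)
    (pow_ne_zero 5 tau_ne_zero) (by norm_num : 5 ≠ 0) i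
  have hXB (i : Fin 2) := isRelPrime_X_binomialForm (pow_ne_zero 5 tau_ne_zero)
    (pow_ne_zero 5 (neg_ne_zero.2 one_ne_zero)) (by norm_num : 5 ≠ 0) i
  have hXYAB := ((hXA 0).mul_right (hXB 0)).mul_left ((hXA 1).mul_right (hXB 1))
  exact (Dvd.intro_left _ C_tau_pow_five_mul_F12).trans
    (hXYAB.mul_dvd (hXY.mul_dvd hX hY) (hAB.mul_dvd hA hB))

lemma F12_ne_zero : F12 ≠ 0 := fun h => by
  simpa [h] using eval_F12 1 1

lemma exists_eq_F12_mul (hP : P ∈ invariants Ibar) (hd : P.IsHomogeneous d) (hP₀ : P ≠ 0)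
    (h : eval ![1, 0] P = 0) :
    ∃ Q ∈ invariants Ibar, ∃ e, Q.IsHomogeneous e ∧ d = 12 + e ∧ P = F12 * Q := by
  obtain ⟨Q, rfl⟩ := F12_dvd_of_eval_vertex_eq_zero hP hd h
  obtain ⟨e, he, hQ⟩ := exists_isHomogeneous_cofactor isHomogeneous_F12 hd hP₀
  exact ⟨Q, mem_invariants_of_mul_mem F12_mem_invariants F12_ne_zero hP, e, hQ, he, rfl⟩

lemma ten_dvd_of_eval_vertex_ne_zero (hP : P ∈ invariants Ibar) (hd : P.IsHomogeneous d)
    (h : eval ![1, 0] P ≠ 0) : 10 ∣ d := by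
  have hα := eval_linSubst alpha P ![1, 0]
  have hsmul : (-zeta5 ^ 2) • ![zeta5 * 1, 0] = (-zeta5 ^ 3) • ![1, 0] := by
    simp [pow_succ]
  rw [(mem_invariants_Ibar.1 hP).1, alpha_mulVec, hsmul, eval_smul_of_isHomogeneous hd,
    eq_comm, mul_eq_right₀ h] at hα
  have hneg : (-zeta5 ^ 3) ^ 5 = -1 := by
    linear_combination -(zeta5 ^ 10 + zeta5 ^ 5 + 1) * zeta5_pow_five
  have heven : Even d := by
    rw [← neg_one_pow_eq_one_iff_even (R := ℂ) (by norm_num)]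
    calc (-1 : ℂ) ^ d = ((-zeta5 ^ 3) ^ 5) ^ d := by rw [hneg]
      _ = ((-zeta5 ^ 3) ^ d) ^ 5 := pow_right_comm _ _ _
      _ = 1 := by rw [hα, one_pow]
  rw [heven.neg_pow, ← pow_mul] at hα
  have hfive : 5 ∣ 3 * d := (isPrimitiveRoot_zeta5.pow_eq_one_iff_dvd _).1 hα
  have htwo : 2 ∣ d := heven.two_dvd
  omega

lemma exists_degree_eq_twelve_mul_add_ten_mul (hP : P ∈ invariants Ibar) (hd : P.IsHomogeneous d)
    (hP₀ : P ≠ 0) : ∃ a b, d = 12 * a + 10 * b := by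
  induction d using Nat.strong_induction_on generalizing P with
  | _ d ih =>
    by_cases h : eval ![1, 0] P = 0
    · obtain ⟨Q, hQ, e, he, rfl, rfl⟩ := exists_eq_F12_mul hP hd hP₀ h
      obtain ⟨a, b, rfl⟩ := ih e (by omega) hQ he (right_ne_zero_of_mul hP₀)
      exact ⟨a + 1, b, by ring⟩
    · obtain ⟨b, rfl⟩ := ten_dvd_of_eval_vertex_ne_zero hP hd h
      exact ⟨0, b, by rw [mul_zero, zero_add]⟩

lemma exists_eq_eval_vertex_smul_add_F12_mul (hP : P ∈ invariants Ibar) (hd : P.IsHomogeneous d)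
    (hM : M ∈ invariants Ibar) (hMd : M.IsHomogeneous d) (hM₁ : eval ![1, 0] M = 1)
    (hne : P ≠ eval ![1, 0] P • M) :
    ∃ Q ∈ invariants Ibar, ∃ e, Q.IsHomogeneous e ∧ d = 12 + e ∧
      P = eval ![1, 0] P • M + F12 * Q := by
  set c := eval ![1, 0] P with hc
  have hcM : (c • M).IsHomogeneous d := by
    rw [smul_eq_C_mul]
    exact hMd.C_mul c
  have heval : eval ![1, 0] (P - c • M) = 0 := by
    rw [map_sub, smul_eval, hM₁, mul_one, ← hc, sub_self]
  obtain ⟨Q, hQ, e, he, hde, hPQ⟩ := exists_eq_F12_mul (sub_mem hP (Subalgebra.smul_mem _ hM c))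
    (hd.sub hcM) (sub_ne_zero.2 hne) heval
  exact ⟨Q, hQ, e, he, hde, sub_eq_iff_eq_add'.1 hPQ⟩

lemma eq_eval_vertex_smul (hP : P ∈ invariants Ibar) (hd : P.IsHomogeneous d)
    (hM : M ∈ invariants Ibar) (hMd : M.IsHomogeneous d) (hM₁ : eval ![1, 0] M = 1)
    (hdeg : d = 20 ∨ d = 30) : P = eval ![1, 0] P • M := by
  by_contra hne
  obtain ⟨Q, hQ, e, he, hde, hPQ⟩ := exists_eq_eval_vertex_smul_add_F12_mul hP hd hM hMd hM₁ hne
  have hQ₀ : Q ≠ 0 := by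
    rintro rfl
    exact hne (by rwa [mul_zero, add_zero] at hPQ)
  obtain ⟨a, b, rfl⟩ := exists_degree_eq_twelve_mul_add_ten_mul hQ he hQ₀
  omega

lemma eval_F20 (x y : ℂ) : eval ![x, y] F20 =
    x ^ 20 - 228 * (x ^ 15 * y ^ 5 - x ^ 5 * y ^ 15) + 494 * x ^ 10 * y ^ 10 + y ^ 20 := by
  simp [F20]

lemma eval_F30 (x y : ℂ) : eval ![x, y] F30 =
    x ^ 30 + 522 * (x ^ 25 * y ^ 5 - x ^ 5 * y ^ 25)
      - 10005 * (x ^ 20 * y ^ 10 + x ^ 10 * y ^ 20) + y ^ 30 := by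
  simp [F30]

lemma eval_F20_vertex : eval ![1, 0] F20 = 1 := by
  norm_num [eval_F20]

lemma eval_F30_vertex : eval ![1, 0] F30 = 1 := by
  norm_num [eval_F30]

lemma eval_vertex_eq_zero_of_isHomogeneous_ten (hP : P ∈ invariants Ibar)
    (hd : P.IsHomogeneous 10) : eval ![1, 0] P = 0 := by
  set c := eval ![1, 0] P
  have hsq : P ^ 2 = c ^ 2 • F20 := by
    simpa only [map_pow] using eq_eval_vertex_smul (pow_mem hP 2) (hd.pow 2) F20_mem_invariants
      isHomogeneous_F20 eval_F20_vertex (.inl rfl)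
  have hcube : P ^ 3 = c ^ 3 • F30 := by
    simpa only [map_pow] using eq_eval_vertex_smul (pow_mem hP 3) (hd.pow 3) F30_mem_invariants
      isHomogeneous_F30 eval_F30_vertex (.inr rfl)
  set p := eval ![1, 1] P with hp
  have hp₂ : p ^ 2 = c ^ 2 * 496 := by
    rw [hp, ← map_pow, hsq, smul_eval, eval_F20]
    norm_num
  have hp₃ : p ^ 3 = c ^ 3 * -20008 := by
    rw [hp, ← map_pow, hcube, smul_eval, eval_F30]
    norm_num
  have hc₆ : c ^ 6 * (496 ^ 3 - 20008 ^ 2) = 0 := by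
    calc c ^ 6 * (496 ^ 3 - 20008 ^ 2) = (c ^ 2 * 496) ^ 3 - (c ^ 3 * -20008) ^ 2 := by ring
      _ = 0 := by rw [← hp₂, ← hp₃, ← pow_mul, ← pow_mul, sub_self]
  exact eq_zero_of_pow_eq_zero ((mul_eq_zero_iff_right (by norm_num)).1 hc₆)

lemma adjoin_le_invariants : Algebra.adjoin ℂ {F30, F20, F12} ≤ invariants Ibar := by
  refine Algebra.adjoin_le ?_
  rintro _ (rfl | rfl | rfl)
  exacts [F30_mem_invariants, F20_mem_invariants, F12_mem_invariants]

lemma exists_mem_adjoin_eval_vertex_eq_one {e : ℕ} (he : e ≠ 1) :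
    ∃ M ∈ Algebra.adjoin ℂ {F30, F20, F12}, M.IsHomogeneous (10 * e) ∧ eval ![1, 0] M = 1 := by
  obtain ⟨a, b, rfl⟩ : ∃ a b, e = 2 * a + 3 * b := by
    rcases e.even_or_odd' with ⟨a, rfl | rfl⟩
    · exact ⟨a, 0, by omega⟩
    · exact ⟨a - 1, 1, by omega⟩
  refine ⟨F20 ^ a * F30 ^ b, mul_mem (pow_mem (Algebra.subset_adjoin (by simp)) a)
    (pow_mem (Algebra.subset_adjoin (by simp)) b), ?_, ?_⟩
  · convert (isHomogeneous_F20.pow a).mul (isHomogeneous_F30.pow b) using 1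
    ring
  · rw [map_mul, map_pow, map_pow, eval_F20_vertex, eval_F30_vertex, one_pow, one_pow, one_mul]

lemma mem_adjoin_of_isHomogeneous (hP : P ∈ invariants Ibar) (hd : P.IsHomogeneous d) :
    P ∈ Algebra.adjoin ℂ {F30, F20, F12} := by
  have hF12 : F12 ∈ Algebra.adjoin ℂ {F30, F20, F12} := Algebra.subset_adjoin (by simp)
  induction d using Nat.strong_induction_on generalizing P with
  | _ d ih =>
    by_cases h : eval ![1, 0] P = 0
    · rcases eq_or_ne P 0 with rfl | hP₀
      · exact zero_mem _
      obtain ⟨Q, hQ, e, he, rfl, rfl⟩ := exists_eq_F12_mul hP hd hP₀ h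
      exact mul_mem hF12 (ih e (by omega) hQ he)
    · obtain ⟨e, rfl⟩ := ten_dvd_of_eval_vertex_ne_zero hP hd h
      have he : e ≠ 1 := by
        rintro rfl
        exact h (eval_vertex_eq_zero_of_isHomogeneous_ten hP hd)
      obtain ⟨M, hM, hMd, hM₁⟩ := exists_mem_adjoin_eval_vertex_eq_one he
      by_cases hPM : P = eval ![1, 0] P • M
      · rw [hPM]
        exact Subalgebra.smul_mem _ hM _
      obtain ⟨Q, hQ, k, hk, hdk, hPQ⟩ :=
        exists_eq_eval_vertex_smul_add_F12_mul hP hd (adjoin_le_invariants hM) hMd hM₁ hPM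
      rw [hPQ]
      exact add_mem (Subalgebra.smul_mem _ hM _) (mul_mem hF12 (ih k (by omega) hQ hk))

end Icosahedral

theorem stmt2 (P : MvPolynomial (Fin 2) ℂ) :
    (∀ g ∈ Ibar, act (g : Matrix (Fin 2) (Fin 2) ℂ) P = P) ↔
      P ∈ Algebra.adjoin ℂ ({F30, F20, F12} : Set (MvPolynomial (Fin 2) ℂ)) := by
  simp only [act_eq_linSubst, ← mem_invariants]
  refine ⟨fun hP => ?_, fun hP => adjoin_le_invariants hP⟩
  rw [← P.sum_homogeneousComponent]
  exact sum_mem fun n _ => mem_adjoin_of_isHomogeneous (homogeneousComponent_mem_invariants hP n)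
    (homogeneousComponent_isHomogeneous n P)
end
end

section
/- The linear automorphism group Lin(Z³⁰ + F₃₀(X,Y)) ⊆ PGL(3,ℂ) of the smooth plane curve C₃₀ : Z³⁰ + F₃₀(X,Y) = 0 has order 1800 = 60·30 and is isomorphic to the direct product ℤ/15 × SL(2,5). -/
noncomputable section
open Matrix MvPolynomial

/-- The subgroup of nonzero scalar matrices in `GL(3, ℂ)`. -/
def scalarSub : Subgroup (GL (Fin 3) ℂ) :=
  (Units.map (algebraMap ℂ (Matrix (Fin 3) (Fin 3) ℂ)).toMonoidHom).range

instance : scalarSub.Normal := by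
  constructor
  rintro n ⟨c, rfl⟩ g
  refine ⟨c, ?_⟩
  ext
  simp only [Units.coe_map, RingHom.toMonoidHom_eq_coe, MonoidHom.coe_coe, Units.val_mul]
  rw [← Algebra.commutes (↑c : ℂ) (↑g : Matrix (Fin 3) (Fin 3) ℂ), mul_assoc,
    ← Units.val_mul, mul_inv_cancel, Units.val_one, mul_one]

/-- `PGL(3, ℂ)`: the quotient of `GL(3, ℂ)` by the nonzero scalar matrices. -/
abbrev PGL3 := GL (Fin 3) ℂ ⧸ scalarSub

/-- `g` maps the zero set of `F` in `ℂ³` onto itself. -/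
def Preserves (F : MvPolynomial (Fin 3) ℂ) (g : GL (Fin 3) ℂ) : Prop :=
  (fun v => (g : Matrix (Fin 3) (Fin 3) ℂ).mulVec v) '' {v : Fin 3 → ℂ | eval v F = 0}
    = {v : Fin 3 → ℂ | eval v F = 0}

/-- The subgroup of `GL(3, ℂ)` of matrices mapping the zero set of `F` onto itself. -/
def LinGL (F : MvPolynomial (Fin 3) ℂ) : Subgroup (GL (Fin 3) ℂ) where
  carrier := {g | Preserves F g}
  one_mem' := by
    show Preserves F 1
    unfold Preserves
    simp [Matrix.one_mulVec]
  mul_mem' := by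
    intro a b ha hb
    show Preserves F (a * b)
    unfold Preserves at *
    have h : (fun v => ((a * b : GL (Fin 3) ℂ) : Matrix (Fin 3) (Fin 3) ℂ).mulVec v)
        = (fun v => (a : Matrix (Fin 3) (Fin 3) ℂ).mulVec v) ∘
          (fun v => (b : Matrix (Fin 3) (Fin 3) ℂ).mulVec v) := by
      funext v
      simp [Matrix.mulVec_mulVec]
    rw [h, Set.image_comp, hb, ha]
  inv_mem' := by
    intro a ha
    show Preserves F a⁻¹
    unfold Preserves at *
    conv_lhs => rw [← ha, ← Set.image_comp]
    have h : ((fun v => ((a⁻¹ : GL (Fin 3) ℂ) : Matrix (Fin 3) (Fin 3) ℂ).mulVec v) ∘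
        (fun v => (a : Matrix (Fin 3) (Fin 3) ℂ).mulVec v)) = id := by
      funext v
      rw [Function.comp_apply, Matrix.mulVec_mulVec, ← Units.val_mul, inv_mul_cancel,
        Units.val_one, Matrix.one_mulVec, id_eq]
    rw [h, Set.image_id]

/-- The linear automorphism group `Lin(F) ⊆ PGL(3, ℂ)`:
classes of matrices mapping the zero set of `F` onto itself. -/
def Lin (F : MvPolynomial (Fin 3) ℂ) : Subgroup PGL3 :=
  (LinGL F).map (QuotientGroup.mk' scalarSub)

/-- `G = Z³⁰ + F₃₀(X, Y)` with `X = X 0`, `Y = X 1`, `Z = X 2`. -/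
def G30 : MvPolynomial (Fin 3) ℂ :=
  X 2 ^ 30 +
    (X 0 ^ 30 + 522 * (X 0 ^ 25 * X 1 ^ 5 - X 0 ^ 5 * X 1 ^ 25)
      - 10005 * (X 0 ^ 20 * X 1 ^ 10 + X 0 ^ 10 * X 1 ^ 20) + X 1 ^ 30)

/-!
A linear map preserving the zero set of `Zⁿ + Φ(X, Y)` multiplies this polynomial by a scalar,
because restricted to a general line through `(0 : 0 : 1)` it has `n` distinct roots.
Differentiating the resulting identity along the third basis vector writes a first polar of `Φ` as
a power of a linear form; as no nonzero polar of `F₃₀` is one, the map is block diagonal, and the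
projective symmetries of the curve are identified with the stabilizer of `F₃₀` in `GL(2, ℂ)`.
Determinants in the stabilizer are 15th roots of unity, and 15 is odd, so it is `μ₁₅ × Γ` with
`Γ ⊆ SL(2, ℂ)`.

If `M` stabilizes `F₃₀`, comparing the Taylor expansions of `F₃₀` at `e₁` along `e₂` and at `M e₁`
along `M e₂` shows that `M e₁` is one of the twelve vertices of the icosahedron. The elements of `Γ`
fixing a vertex form a group of order at most ten, whence `|Γ| ≤ 120`. Conversely, a conjugate of
`Γ` contains two matrices over `ℤ[ζ₅]` which reduce modulo the prime above five to generators of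
`SL(2, 5)`, a group of order 120.
-/

section Lines

variable {σ R : Type*} [CommRing R]

/-- The derivative `∑ i, w i • ∂/∂Xᵢ` in the constant direction `w`. -/
def dirDeriv (w : σ → R) : Derivation R (MvPolynomial σ R) (MvPolynomial σ R) :=
  mkDerivation R fun i ↦ C (w i)

/-- Restriction of polynomials to the line `t ↦ u + t • w`. -/
def lineRestrict (u w : σ → R) : MvPolynomial σ R →ₐ[R] Polynomial R :=
  aeval fun i ↦ Polynomial.C (u i) + Polynomial.C (w i) * Polynomial.X

lemma dirDeriv_X (w : σ → R) (i : σ) : dirDeriv w (X i) = C (w i) :=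
  mkDerivation_X _ _ _

lemma dirDeriv_zero (F : MvPolynomial σ R) : dirDeriv (0 : σ → R) F = 0 := by
  have h : dirDeriv (0 : σ → R) = 0 := derivation_ext fun i ↦ by simp [dirDeriv_X]
  rw [h, Derivation.zero_apply]

lemma dirDeriv_ofNat (w : σ → R) (k : ℕ) [k.AtLeastTwo] :
    dirDeriv w (ofNat(k) : MvPolynomial σ R) = 0 :=
  Derivation.map_natCast _ k

lemma dirDeriv_smul (c : R) (w : σ → R) (F : MvPolynomial σ R) :
    dirDeriv (c • w) F = c • dirDeriv w F := by
  have h : dirDeriv (c • w) = c • dirDeriv w :=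
    derivation_ext fun i ↦ by simp [dirDeriv_X, smul_eq_C_mul]
  rw [h, Derivation.smul_apply]

lemma iterate_dirDeriv_smul (c : R) (w : σ → R) (F : MvPolynomial σ R) (k : ℕ) :
    (dirDeriv (c • w))^[k] F = c ^ k • (dirDeriv w)^[k] F := by
  induction k with
  | zero => simp
  | succ k ih =>
    rw [Function.iterate_succ_apply', ih, dirDeriv_smul, Derivation.map_smul, smul_smul,
      ← pow_succ', Function.iterate_succ_apply']

lemma lineRestrict_X (u w : σ → R) (i : σ) :
    lineRestrict u w (X i) = Polynomial.C (u i) + Polynomial.C (w i) * Polynomial.X :=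
  aeval_X _ _

lemma eval_lineRestrict (u w : σ → R) (t : R) (F : MvPolynomial σ R) :
    (lineRestrict u w F).eval t = eval (u + t • w) F := by
  induction F using MvPolynomial.induction_on with
  | C a => simp [lineRestrict]
  | add p q hp hq => simp only [map_add, Polynomial.eval_add, hp, hq]
  | mul_X p i hp =>
    simp only [map_mul, Polynomial.eval_mul, hp, lineRestrict_X, eval_X, Polynomial.eval_add,
      Polynomial.eval_C, Polynomial.eval_X, Pi.add_apply, Pi.smul_apply, smul_eq_mul, mul_comm]

lemma natDegree_lineRestrict_le {n : ℕ} {F : MvPolynomial σ R} (hF : F.totalDegree ≤ n)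
    (u w : σ → R) : (lineRestrict u w F).natDegree ≤ n := by
  refine (aeval_natDegree_le F hF _ fun i ↦ ?_).trans_eq (mul_one n)
  rw [add_comm]
  exact Polynomial.natDegree_linear_le

lemma derivative_lineRestrict (u w : σ → R) (F : MvPolynomial σ R) :
    (lineRestrict u w F).derivative = lineRestrict u w (dirDeriv w F) := by
  induction F using MvPolynomial.induction_on with
  | C a => simp [lineRestrict, dirDeriv]
  | add p q hp hq => simp only [map_add, hp, hq]
  | mul_X p i hp =>
    simp only [map_mul, Polynomial.derivative_mul, hp, lineRestrict_X, Derivation.leibniz,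
      dirDeriv_X, smul_eq_mul, map_add, Polynomial.derivative_C, Polynomial.derivative_X,
      algHom_C, Polynomial.algebraMap_eq]
    ring

lemma iterate_derivative_lineRestrict (u w : σ → R) (F : MvPolynomial σ R) (k : ℕ) :
    Polynomial.derivative^[k] (lineRestrict u w F) = lineRestrict u w ((dirDeriv w)^[k] F) := by
  induction k generalizing F with
  | zero => rfl
  | succ k ih => rw [Function.iterate_succ_apply, Function.iterate_succ_apply,
      derivative_lineRestrict, ih]

lemma eval_iterate_dirDeriv_of_eval_mulVec [IsDomain R] [Infinite R] [Fintype σ]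
    {F : MvPolynomial σ R} {M : Matrix σ σ R} {c : R}
    (hM : ∀ v, eval (M *ᵥ v) F = c * eval v F) (u w : σ → R) (k : ℕ) :
    eval (M *ᵥ u) ((dirDeriv (M *ᵥ w))^[k] F) = c * eval u ((dirDeriv w)^[k] F) := by
  have hline : lineRestrict (M *ᵥ u) (M *ᵥ w) F = Polynomial.C c * lineRestrict u w F := by
    refine Polynomial.funext fun t ↦ ?_
    rw [eval_lineRestrict, ← mulVec_smul, ← mulVec_add, hM, Polynomial.eval_C_mul,
      eval_lineRestrict]
  have hderiv := congrArg (fun p ↦ (Polynomial.derivative^[k] p).eval 0) hline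
  simpa [iterate_derivative_lineRestrict, eval_lineRestrict, Polynomial.iterate_derivative_C_mul]
    using hderiv

lemma eval_smul_of_isHomogeneous_s6 {n : ℕ} {F : MvPolynomial σ R} (hF : F.IsHomogeneous n)
    (c : R) (v : σ → R) : eval (c • v) F = c ^ n * eval v F := by
  simp only [eval_eq, Finset.mul_sum]
  refine Finset.sum_congr rfl fun d hd ↦ ?_
  simp only [Pi.smul_apply, smul_eq_mul, mul_pow, Finset.prod_mul_distrib,
    Finset.prod_pow_eq_pow_sum, ← hF.degree_eq_sum_deg_support hd]
  ring

end Lines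

section CyclicCover

lemma eq_C_mul_one_add_mul_X_pow {K : Type*} [Field K] [IsAlgClosed K] {n : ℕ} (hn : 0 < n)
    {ζ : K} (hζ : IsPrimitiveRoot ζ n) {a : K} (ha : a ≠ 0) {p : Polynomial K}
    (hdeg : p.natDegree ≤ n) (hp : ∀ t, 1 + a * t ^ n = 0 → p.eval t = 0) :
    p = Polynomial.C (p.eval 0) * (1 + Polynomial.C a * Polynomial.X ^ n) := by
  classical
  have ha' : -a⁻¹ ≠ 0 := neg_ne_zero.mpr (inv_ne_zero ha)
  obtain ⟨b, hb⟩ := IsAlgClosed.exists_pow_nat_eq (-a⁻¹) hn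
  rw [← sub_eq_zero]
  refine Polynomial.eq_zero_of_natDegree_lt_card_of_eval_eq_zero' _
    (insert 0 (Polynomial.nthRoots n (-a⁻¹)).toFinset) ?_ ?_
  · simp only [Finset.forall_mem_insert, Multiset.mem_toFinset, Polynomial.mem_nthRoots hn]
    refine ⟨by simp [hn.ne'], fun t ht ↦ ?_⟩
    have hat : 1 + a * t ^ n = 0 := by rw [ht, mul_neg, mul_inv_cancel₀ ha, add_neg_cancel]
    simp [hp t hat, hat]
  · rw [Finset.card_insert_of_notMem, Multiset.toFinset_card_of_nodup (hζ.nthRoots_nodup ha'),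
      hζ.card_nthRoots, if_pos ⟨b, hb⟩, Nat.lt_succ_iff]
    · compute_degree!
    · rw [Multiset.mem_toFinset, Polynomial.mem_nthRoots hn, zero_pow hn.ne']
      exact ha'.symm

/-- The polynomial `Zⁿ + Φ(X, Y)`, whose zero locus is the `n`-fold cyclic cover of the projective
line branched over the zeros of the binary form `Φ`. -/
def cyclicCover (n : ℕ) (Φ : MvPolynomial (Fin 2) ℂ) : MvPolynomial (Fin 3) ℂ :=
  X 2 ^ n + rename Fin.castSucc Φ

/-- A binary form `Φ` of degree `n` has nondegenerate polars if none of its first polars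
`∂Φ/∂w` with `w ≠ 0` is a multiple of the `(n - 1)`-st power of a linear form. -/
def HasNondegeneratePolars (n : ℕ) (Φ : MvPolynomial (Fin 2) ℂ) : Prop :=
  ∀ (w ℓ : Fin 2 → ℂ) (c : ℂ),
    (∀ v, eval v (dirDeriv w Φ) = c * (ℓ ⬝ᵥ v) ^ (n - 1)) → w = 0

variable {n : ℕ} {Φ : MvPolynomial (Fin 2) ℂ}

lemma HasNondegeneratePolars.ne_zero (hΦ : HasNondegeneratePolars n Φ) : Φ ≠ 0 := by
  rintro rfl
  exact one_ne_zero (congrFun (hΦ 1 0 0 (by simp)) 0)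

lemma eq_vec2 (v : Fin 2 → ℂ) : v = ![v 0, v 1] := by
  ext i; fin_cases i <;> rfl

lemma eq_vec3 (v : Fin 3 → ℂ) : v = ![v 0, v 1, v 2] := by
  ext i; fin_cases i <;> rfl

lemma vec3_comp_castSucc (x y z : ℂ) : ![x, y, z] ∘ Fin.castSucc = ![x, y] := by
  ext i; fin_cases i <;> rfl

lemma eval_cyclicCover (x y z : ℂ) :
    eval ![x, y, z] (cyclicCover n Φ) = z ^ n + eval ![x, y] Φ := by
  simp [cyclicCover, eval_rename, vec3_comp_castSucc]

lemma isHomogeneous_cyclicCover (h : Φ.IsHomogeneous n) : (cyclicCover n Φ).IsHomogeneous n :=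
  (isHomogeneous_X_pow 2 n).add h.rename_isHomogeneous

lemma dirDeriv_rename_castSucc (w : Fin 3 → ℂ) :
    dirDeriv w (rename Fin.castSucc Φ) =
      rename Fin.castSucc (dirDeriv (w ∘ Fin.castSucc) Φ) := by
  induction Φ using MvPolynomial.induction_on with
  | C a => simp [dirDeriv]
  | add p q hp hq => simp only [map_add, hp, hq]
  | mul_X p i hp =>
    simp only [map_mul, Derivation.leibniz, hp, rename_X, dirDeriv_X, smul_eq_mul, map_add,
      rename_C, Function.comp_apply]

lemma eval_dirDeriv_cyclicCover (w : Fin 3 → ℂ) (x y z : ℂ) :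
    eval ![x, y, z] (dirDeriv w (cyclicCover n Φ)) =
      n * z ^ (n - 1) * w 2 + eval ![x, y] (dirDeriv ![w 0, w 1] Φ) := by
  have hw : w ∘ Fin.castSucc = ![w 0, w 1] := by ext i; fin_cases i <;> rfl
  rw [cyclicCover, map_add, map_add, dirDeriv_rename_castSucc, eval_rename, vec3_comp_castSucc,
    hw, Derivation.leibniz_pow, dirDeriv_X]
  simp [mul_assoc]

section Semiinvariance

variable {M : Matrix (Fin 3) (Fin 3) ℂ}

/-- Replacing `(x, y, 1)` by `(tx, ty, 1)` turns the left-hand side into a polynomial in `t` of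
degree at most `n`, which vanishes at the `n` roots of `1 + Φ(x, y) tⁿ`. -/
lemma eval_mulVec_of_eval_ne_zero (hn : 0 < n) (h : Φ.IsHomogeneous n)
    (hM : ∀ v, eval v (cyclicCover n Φ) = 0 → eval (M *ᵥ v) (cyclicCover n Φ) = 0)
    {x y : ℂ} (hxy : eval ![x, y] Φ ≠ 0) :
    eval (M *ᵥ ![x, y, 1]) (cyclicCover n Φ) =
      eval (M *ᵥ ![0, 0, 1]) (cyclicCover n Φ) * eval ![x, y, 1] (cyclicCover n Φ) := by
  set p := lineRestrict (M *ᵥ ![0, 0, 1]) (M *ᵥ ![x, y, 0]) (cyclicCover n Φ)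
  have hp (t : ℂ) : p.eval t = eval (M *ᵥ ![t * x, t * y, 1]) (cyclicCover n Φ) := by
    rw [eval_lineRestrict, ← mulVec_smul, ← mulVec_add]
    simp
  have hroots (t : ℂ) (ht : 1 + eval ![x, y] Φ * t ^ n = 0) : p.eval t = 0 := by
    have hxyt : ![t * x, t * y] = t • ![x, y] := by simp
    rw [hp]
    refine hM _ ?_
    rw [eval_cyclicCover, one_pow, hxyt, eval_smul_of_isHomogeneous_s6 h, mul_comm, ht]
  have hdeg := natDegree_lineRestrict_le (isHomogeneous_cyclicCover h).totalDegree_le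
    (M *ᵥ ![0, 0, 1]) (M *ᵥ ![x, y, 0])
  have hp1 := congrArg (Polynomial.eval 1) (eq_C_mul_one_add_mul_X_pow hn
    (Complex.isPrimitiveRoot_exp n hn.ne') hxy hdeg hroots)
  rw [Polynomial.eval_mul, Polynomial.eval_C, hp, hp] at hp1
  simpa [eval_cyclicCover] using hp1

lemma eval_mulVec_cyclicCover (hn : 0 < n) (h : Φ.IsHomogeneous n) (hΦ : Φ ≠ 0)
    (hM : ∀ v, eval v (cyclicCover n Φ) = 0 → eval (M *ᵥ v) (cyclicCover n Φ) = 0)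
    (v : Fin 3 → ℂ) :
    eval (M *ᵥ v) (cyclicCover n Φ) =
      eval (M *ᵥ ![0, 0, 1]) (cyclicCover n Φ) * eval v (cyclicCover n Φ) := by
  set G := cyclicCover n Φ
  set c := eval (M *ᵥ ![0, 0, 1]) G
  set Q : MvPolynomial (Fin 3) ℂ := bind₁ (fun i ↦ ∑ j, C (M i j) * X j) G - C c * G with hQ
  have eval_Q (v : Fin 3 → ℂ) : eval v Q = eval (M *ᵥ v) G - c * eval v G := by
    have hsubst : eval v (bind₁ (fun i ↦ ∑ j, C (M i j) * X j) G) = eval (M *ᵥ v) G := by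
      refine (eval₂Hom_bind₁ _ _ _ _).trans ?_
      congr 2 with i
      simp [mulVec, dotProduct]
    rw [hQ, map_sub, hsubst, map_mul, eval_C]
  have hQ_mul : Q * (X 2 * rename Fin.castSucc Φ) = 0 := by
    refine MvPolynomial.funext fun v ↦ ?_
    obtain ⟨x, y, z, rfl⟩ : ∃ x y z, v = ![x, y, z] := ⟨_, _, _, eq_vec3 v⟩
    simp only [map_mul, eval_X, eval_rename, vec3_comp_castSucc, map_zero, mul_eq_zero]
    by_contra! hne
    obtain ⟨hQv, hz : z ≠ 0, hxy⟩ := hne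
    have hv : ![x, y, z] = z • ![x / z, y / z, 1] := by simp [mul_div_cancel₀, hz]
    have hxy' : eval ![x / z, y / z] Φ ≠ 0 := by
      have : ![x, y] = z • ![x / z, y / z] := by simp [mul_div_cancel₀, hz]
      rw [this, eval_smul_of_isHomogeneous_s6 h] at hxy
      exact right_ne_zero_of_mul hxy
    apply hQv
    rw [eval_Q, hv, mulVec_smul, eval_smul_of_isHomogeneous_s6 (isHomogeneous_cyclicCover h),
      eval_smul_of_isHomogeneous_s6 (isHomogeneous_cyclicCover h),
      eval_mulVec_of_eval_ne_zero hn h hM hxy']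
    ring
  have hQ_zero : Q = 0 := by
    refine (mul_eq_zero.mp hQ_mul).resolve_right (mul_ne_zero (X_ne_zero 2) fun hren ↦ hΦ ?_)
    exact rename_injective _ (Fin.castSucc_injective 2) (hren.trans (map_zero _).symm)
  rw [← sub_eq_zero, ← eval_Q, hQ_zero, map_zero]

/-- Differentiating the semi-invariance along `e₃` expresses a first polar of `Φ` through
`(n - 1)`-st powers of linear forms. -/
lemma eval_polar_of_eval_mulVec {N : Matrix (Fin 3) (Fin 3) ℂ} (hMN : M * N = 1) {c : ℂ}
    (hM : ∀ v, eval (M *ᵥ v) (cyclicCover n Φ) = c * eval v (cyclicCover n Φ)) (x y z : ℂ) :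
    n * z ^ (n - 1) * M 2 2 + eval ![x, y] (dirDeriv ![M 0 2, M 1 2] Φ) =
      c * (n * (N *ᵥ ![x, y, z]) 2 ^ (n - 1)) := by
  have hcol (i : Fin 3) : (M *ᵥ ![0, 0, 1]) i = M i 2 := by
    simp [mulVec, dotProduct, Fin.sum_univ_three]
  have h := eval_iterate_dirDeriv_of_eval_mulVec hM (N *ᵥ ![x, y, z]) ![0, 0, 1] 1
  have he : ![(![0, 0, 1] : Fin 3 → ℂ) 0, (![0, 0, 1] : Fin 3 → ℂ) 1] = 0 := by simp
  rw [Function.iterate_one, Function.iterate_one, mulVec_mulVec, hMN, one_mulVec,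
    eval_dirDeriv_cyclicCover, hcol, hcol, hcol,
    eq_vec3 (N *ᵥ _), eval_dirDeriv_cyclicCover, he, dirDeriv_zero, map_zero, add_zero] at h
  rw [h]
  simp

lemma blockDiagonal_of_eval_mulVec (hn : 1 < n) (hΦ : HasNondegeneratePolars n Φ)
    {N : Matrix (Fin 3) (Fin 3) ℂ} (hMN : M * N = 1) {c : ℂ} (hc : c ≠ 0)
    (hM : ∀ v, eval (M *ᵥ v) (cyclicCover n Φ) = c * eval v (cyclicCover n Φ)) :
    M 0 2 = 0 ∧ M 1 2 = 0 ∧ M 2 0 = 0 ∧ M 2 1 = 0 := by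
  have hn0 : n - 1 ≠ 0 := by lia
  have hpolar (x y : ℂ) : eval ![x, y] (dirDeriv ![M 0 2, M 1 2] Φ) =
      c * n * (N 2 0 * x + N 2 1 * y) ^ (n - 1) := by
    have h := eval_polar_of_eval_mulVec hMN hM x y 0
    rw [zero_pow hn0, mul_zero, zero_mul, zero_add] at h
    simp [h, mulVec, dotProduct, Fin.sum_univ_three, mul_assoc]
  have hcol : ![M 0 2, M 1 2] = 0 := by
    refine hΦ _ ![N 2 0, N 2 1] (c * n) fun v ↦ ?_
    rw [eq_vec2 v, hpolar]
    simp
  have hrow (x y : ℂ) : N 2 0 * x + N 2 1 * y = 0 := by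
    have h := hpolar x y
    have hcn : c * n ≠ 0 := mul_ne_zero hc (Nat.cast_ne_zero.mpr (by lia))
    rw [hcol, dirDeriv_zero, map_zero, eq_comm, mul_eq_zero] at h
    exact eq_zero_of_pow_eq_zero (h.resolve_left hcn)
  have h20 : N 2 0 = 0 := by simpa using hrow 1 0
  have h21 : N 2 1 = 0 := by simpa using hrow 0 1
  have hinv (j : Fin 3) : N 2 2 * M 2 j = (1 : Matrix (Fin 3) (Fin 3) ℂ) 2 j := by
    rw [← mul_eq_one_comm.mp hMN]
    simp [Matrix.mul_apply, Fin.sum_univ_three, h20, h21]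
  have h22 : N 2 2 ≠ 0 := left_ne_zero_of_mul_eq_one (hinv 2)
  have h0 : N 2 2 * M 2 0 = 0 := hinv 0
  have h1 : N 2 2 * M 2 1 = 0 := hinv 1
  exact ⟨by simpa using congrFun hcol 0, by simpa using congrFun hcol 1,
    (mul_eq_zero.mp h0).resolve_left h22, (mul_eq_zero.mp h1).resolve_left h22⟩

end Semiinvariance

/-- The subgroup of `GL(2, ℂ)` of linear substitutions leaving the binary form `Φ` invariant. -/
def formStabilizer (Φ : MvPolynomial (Fin 2) ℂ) : Subgroup (GL (Fin 2) ℂ) where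
  carrier := {A | ∀ v, eval (A.val *ᵥ v) Φ = eval v Φ}
  one_mem' := fun v ↦ by rw [Units.val_one, one_mulVec]
  mul_mem' := fun {A B} hA hB v ↦ by rw [Units.val_mul, ← mulVec_mulVec, hA, hB]
  inv_mem' := fun {A} hA v ↦ by
    rw [← hA, mulVec_mulVec, ← Units.val_mul, mul_inv_cancel, Units.val_one, one_mulVec]

/-- The block-diagonal embedding `A ↦ diag(A, 1)` of `GL(2, ℂ)` into `GL(3, ℂ)`. -/
def blockEmbedding : GL (Fin 2) ℂ →* GL (Fin 3) ℂ :=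
  Units.map
    { toFun := fun A ↦ !![A 0 0, A 0 1, 0; A 1 0, A 1 1, 0; 0, 0, 1]
      map_one' := by ext i j; fin_cases i <;> fin_cases j <;> rfl
      map_mul' := fun A B ↦ by
        ext i j
        fin_cases i <;> fin_cases j <;> simp [Matrix.mul_apply, Fin.sum_univ_succ] }

lemma blockEmbedding_mulVec (A : GL (Fin 2) ℂ) (x y z : ℂ) :
    (blockEmbedding A).val *ᵥ ![x, y, z] =
      ![(A.val *ᵥ ![x, y]) 0, (A.val *ᵥ ![x, y]) 1, z] := by
  ext i
  fin_cases i <;> simp [blockEmbedding, mulVec, dotProduct, Fin.sum_univ_succ]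

lemma eval_mulVec_eq_zero_iff_of_mem_LinGL {F : MvPolynomial (Fin 3) ℂ} {g : GL (Fin 3) ℂ}
    (hg : g ∈ LinGL F) (v : Fin 3 → ℂ) : eval (g.val *ᵥ v) F = 0 ↔ eval v F = 0 := by
  have hg' : (g.val *ᵥ ·) '' {v | eval v F = 0} = {v | eval v F = 0} := hg
  have hinj : Function.Injective (g.val *ᵥ ·) := mulVec_injective_of_isUnit g.isUnit
  exact (Set.ext_iff.mp hg' _).symm.trans hinj.mem_set_image

lemma mem_LinGL_of_eval_mulVec {F : MvPolynomial (Fin 3) ℂ} {g : GL (Fin 3) ℂ}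
    (hg : ∀ v, eval (g.val *ᵥ v) F = eval v F) : g ∈ LinGL F := by
  change (g.val *ᵥ ·) '' {v | eval v F = 0} = {v | eval v F = 0}
  have hinv (v : Fin 3 → ℂ) : g.val *ᵥ (g⁻¹.val *ᵥ v) = v := by
    rw [mulVec_mulVec, ← Units.val_mul, mul_inv_cancel, Units.val_one, one_mulVec]
  ext v
  refine ⟨?_, fun hv ↦ ⟨g⁻¹.val *ᵥ v, ?_, hinv v⟩⟩
  · rintro ⟨u, hu, rfl⟩
    exact (hg u).trans hu
  · rwa [Set.mem_ofPred_eq, ← hg, hinv]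

lemma blockEmbedding_mem_LinGL {A : GL (Fin 2) ℂ} (hA : A ∈ formStabilizer Φ) :
    blockEmbedding A ∈ LinGL (cyclicCover n Φ) := by
  refine mem_LinGL_of_eval_mulVec fun v ↦ ?_
  rw [eq_vec3 v, blockEmbedding_mulVec, eval_cyclicCover, ← eq_vec2, hA, eval_cyclicCover]

lemma exists_eq_smul_blockEmbedding (g : GL (Fin 3) ℂ)
    (hg : g.val 0 2 = 0 ∧ g.val 1 2 = 0 ∧ g.val 2 0 = 0 ∧ g.val 2 1 = 0) :
    ∃ (d : ℂˣ) (A : GL (Fin 2) ℂ), g.val = (d : ℂ) • (blockEmbedding A).val := by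
  obtain ⟨h02, h12, h20, h21⟩ := hg
  have hdet : (g.val 0 0 * g.val 1 1 - g.val 0 1 * g.val 1 0) * g.val 2 2 ≠ 0 := by
    convert ((isUnit_iff_isUnit_det _).mp g.isUnit).ne_zero using 1
    rw [det_fin_three, h02, h12, h20, h21]
    ring
  have hd : g.val 2 2 ≠ 0 := right_ne_zero_of_mul hdet
  refine ⟨Units.mk0 _ hd, GeneralLinearGroup.mkOfDetNeZero
    ((g.val 2 2)⁻¹ • !![g.val 0 0, g.val 0 1; g.val 1 0, g.val 1 1]) ?_, ?_⟩
  · rw [det_smul, det_fin_two_of]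
    exact mul_ne_zero (pow_ne_zero _ (inv_ne_zero hd)) (left_ne_zero_of_mul hdet)
  · ext i j
    fin_cases i <;> fin_cases j <;>
      simp [blockEmbedding, GeneralLinearGroup.mkOfDetNeZero, h02, h12, h20, h21,
        mul_inv_cancel_left₀ hd]

/-- The homomorphism sending a linear symmetry `A` of `Φ` to the class of `diag(A, 1)`. -/
def formStabilizerToPGL (Φ : MvPolynomial (Fin 2) ℂ) : formStabilizer Φ →* PGL3 :=
  ((QuotientGroup.mk' scalarSub).comp blockEmbedding).comp (formStabilizer Φ).subtype

lemma formStabilizerToPGL_injective : Function.Injective (formStabilizerToPGL Φ) := by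
  refine (injective_iff_map_eq_one _).mpr fun A hA ↦ ?_
  obtain ⟨c, hc⟩ : blockEmbedding A.val ∈ scalarSub := (QuotientGroup.eq_one_iff _).mp hA
  have hentry (i j : Fin 3) : algebraMap ℂ (Matrix (Fin 3) (Fin 3) ℂ) c i j =
      (blockEmbedding A.val).val i j := by rw [← hc]; rfl
  have hc1 : (c : ℂ) = 1 := by simpa [blockEmbedding, algebraMap_matrix_apply] using hentry 2 2
  ext i j
  have hij := hentry i.castSucc j.castSucc
  fin_cases i <;> fin_cases j <;>
    simpa [blockEmbedding, algebraMap_matrix_apply, hc1, eq_comm] using hij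

lemma exists_mem_formStabilizer_of_mem_LinGL (hn : 1 < n) (h : Φ.IsHomogeneous n)
    (hΦ : HasNondegeneratePolars n Φ) {g : GL (Fin 3) ℂ} (hg : g ∈ LinGL (cyclicCover n Φ)) :
    ∃ (d : ℂˣ), ∃ A ∈ formStabilizer Φ, g.val = (d : ℂ) • (blockEmbedding A).val := by
  have hn0 : n ≠ 0 := by lia
  have hg0 := eval_mulVec_eq_zero_iff_of_mem_LinGL hg
  have hsemi := eval_mulVec_cyclicCover (zero_lt_one.trans hn) h hΦ.ne_zero
    fun v hv ↦ (hg0 v).mpr hv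
  set c := eval (g.val *ᵥ ![0, 0, 1]) (cyclicCover n Φ)
  have hΦ0 : eval ![0, 0] Φ = 0 := by
    have h0 : (![0, 0] : Fin 2 → ℂ) = (0 : ℂ) • ![0, 0] := by simp
    rw [h0, eval_smul_of_isHomogeneous_s6 h, zero_pow hn0, zero_mul]
  have he₃ : eval ![0, 0, 1] (cyclicCover n Φ) = 1 := by
    rw [eval_cyclicCover, hΦ0, one_pow, add_zero]
  have hc : c ≠ 0 := by simp [c, hg0, he₃]
  obtain ⟨d, A, hgA⟩ := exists_eq_smul_blockEmbedding g
    (blockDiagonal_of_eval_mulVec hn hΦ (congrArg Units.val (mul_inv_cancel g)) hc hsemi)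
  have hA (x y z : ℂ) : (d : ℂ) ^ n * (z ^ n + eval (A.val *ᵥ ![x, y]) Φ) =
      c * (z ^ n + eval ![x, y] Φ) := by
    have hxyz := hsemi ![x, y, z]
    rwa [hgA, smul_mulVec, eval_smul_of_isHomogeneous_s6 (isHomogeneous_cyclicCover h),
      blockEmbedding_mulVec, eval_cyclicCover, ← eq_vec2, eval_cyclicCover] at hxyz
  have hdc : (d : ℂ) ^ n = c := by
    have h1 := hA 0 0 1
    have h0 := hA 0 0 0
    rw [zero_pow hn0, zero_add, zero_add, hΦ0, mul_zero] at h0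
    linear_combination h1 - h0 + c * hΦ0
  refine ⟨d, A, fun v ↦ ?_, hgA⟩
  have hv := hA (v 0) (v 1) 0
  rw [zero_pow hn0, zero_add, zero_add, hdc, ← eq_vec2] at hv
  exact mul_left_cancel₀ hc hv

lemma range_formStabilizerToPGL (hn : 1 < n) (h : Φ.IsHomogeneous n)
    (hΦ : HasNondegeneratePolars n Φ) :
    (formStabilizerToPGL Φ).range = Lin (cyclicCover n Φ) := by
  ext γ
  constructor
  · rintro ⟨A, rfl⟩
    exact ⟨blockEmbedding A.val, blockEmbedding_mem_LinGL A.property, rfl⟩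
  · rintro ⟨g, hg, rfl⟩
    obtain ⟨d, A, hA, hgA⟩ := exists_mem_formStabilizer_of_mem_LinGL hn h hΦ hg
    refine ⟨⟨A, hA⟩, QuotientGroup.eq.mpr ⟨d, ?_⟩⟩
    change _ = (blockEmbedding A)⁻¹ * g
    rw [eq_inv_mul_iff_mul_eq]
    ext1
    rw [hgA, Algebra.smul_def, Algebra.commutes]
    rfl

/-- The linear symmetries of a cyclic cover `Zⁿ + Φ`, taken modulo scalars, are those of `Φ`. -/
def formStabilizerEquivLin (hn : 1 < n) (h : Φ.IsHomogeneous n)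
    (hΦ : HasNondegeneratePolars n Φ) : formStabilizer Φ ≃* Lin (cyclicCover n Φ) :=
  (MonoidHom.ofInjective formStabilizerToPGL_injective).trans
    (MulEquiv.subgroupCongr (range_formStabilizerToPGL hn h hΦ))

end CyclicCover

section Splitting

variable {Φ : MvPolynomial (Fin 2) ℂ} {m : ℕ}

/-- The subgroup of `SL(2, ℂ)` of unimodular substitutions leaving the binary form `Φ` invariant. -/
def unimodularStabilizer (Φ : MvPolynomial (Fin 2) ℂ) :
    Subgroup (Matrix.SpecialLinearGroup (Fin 2) ℂ) :=
  (formStabilizer Φ).comap SpecialLinearGroup.toGL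

lemma mem_unimodularStabilizer_iff {B : Matrix.SpecialLinearGroup (Fin 2) ℂ} :
    B ∈ unimodularStabilizer Φ ↔ ∀ v, eval (B.val *ᵥ v) Φ = eval v Φ :=
  Iff.rfl

lemma scalar_mul_mem_formStabilizer_iff (hΦ : Φ.IsHomogeneous (2 * m)) {u : ℂˣ} (hu : u ^ m = 1)
    (A : GL (Fin 2) ℂ) :
    GeneralLinearGroup.scalar (Fin 2) u * A ∈ formStabilizer Φ ↔ A ∈ formStabilizer Φ := by
  have hu' : (u : ℂ) ^ (2 * m) = 1 := by
    rw [← Units.val_pow_eq_pow_val, mul_comm, pow_mul, hu, one_pow, Units.val_one]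
  have hval : (GeneralLinearGroup.scalar (Fin 2) u * A).val = (u : ℂ) • A.val := by
    ext i j
    simp
  refine forall_congr' fun v ↦ ?_
  rw [hval, smul_mulVec, eval_smul_of_isHomogeneous_s6 hΦ, hu', one_mul]

/-- The homomorphism `(u, B) ↦ u • B` on `m`-th roots of unity and unimodular symmetries of a form
of degree `2 * m`. -/
def rootsOfUnityProdToFormStabilizer (hΦ : Φ.IsHomogeneous (2 * m)) :
    rootsOfUnity m ℂ × unimodularStabilizer Φ →* formStabilizer Φ :=
  (MonoidHom.noncommCoprod
    ((GeneralLinearGroup.scalar (Fin 2)).comp (rootsOfUnity m ℂ).subtype)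
    (SpecialLinearGroup.toGL.comp (unimodularStabilizer Φ).subtype)
    fun _ _ ↦ GeneralLinearGroup.scalar_commute _ _).codRestrict (formStabilizer Φ) fun p ↦
      (scalar_mul_mem_formStabilizer_iff hΦ ((mem_rootsOfUnity _ _).mp p.1.property) _).mpr
        (Subgroup.mem_comap.mp p.2.property)

lemma rootsOfUnityProdToFormStabilizer_injective (hΦ : Φ.IsHomogeneous (2 * m)) (hm : Odd m) :
    Function.Injective (rootsOfUnityProdToFormStabilizer hΦ) := by
  refine (injective_iff_map_eq_one _).mpr ?_
  rintro ⟨⟨u, hu⟩, B⟩ h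
  have hmul : GeneralLinearGroup.scalar (Fin 2) u * SpecialLinearGroup.toGL B.val = 1 :=
    congrArg Subtype.val h
  have hu2 : u ^ 2 = 1 := by
    have hB : GeneralLinearGroup.det (SpecialLinearGroup.toGL B.val) = 1 := Units.ext B.val.property
    have hdet := congrArg GeneralLinearGroup.det hmul
    rwa [map_mul, GeneralLinearGroup.det_scalar, Fintype.card_fin, hB, mul_one, map_one] at hdet
  have hu1 : u = 1 := by
    obtain ⟨k, rfl⟩ := hm
    rwa [mem_rootsOfUnity, pow_succ, pow_mul, hu2, one_pow, one_mul] at hu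
  subst hu1
  rw [map_one, one_mul, ← map_one SpecialLinearGroup.toGL] at hmul
  exact Prod.ext rfl (Subtype.ext (SpecialLinearGroup.toGL_injective hmul))

lemma rootsOfUnityProdToFormStabilizer_surjective (hΦ : Φ.IsHomogeneous (2 * m)) (hm : Odd m)
    (hdet : ∀ A ∈ formStabilizer Φ, GeneralLinearGroup.det A ^ m = 1) :
    Function.Surjective (rootsOfUnityProdToFormStabilizer hΦ) := by
  rintro ⟨A, hA⟩
  obtain ⟨k, hk⟩ := hm
  set u := GeneralLinearGroup.det A ^ (k + 1) with hu
  have hum : u ^ m = 1 := by rw [hu, pow_right_comm, hdet A hA, one_pow]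
  have hu2 : u ^ 2 = GeneralLinearGroup.det A := by
    rw [hu, ← pow_mul, show (k + 1) * 2 = m + 1 by lia, pow_succ, hdet A hA, one_mul]
  have hdet1 : GeneralLinearGroup.det (GeneralLinearGroup.scalar (Fin 2) u⁻¹ * A) = 1 := by
    rw [map_mul, GeneralLinearGroup.det_scalar, Fintype.card_fin, inv_pow, hu2, inv_mul_cancel]
  obtain ⟨B, hB⟩ : ∃ B, SpecialLinearGroup.toGL B = GeneralLinearGroup.scalar (Fin 2) u⁻¹ * A :=
    ⟨⟨_, congrArg Units.val hdet1⟩, Units.ext rfl⟩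
  have hBΦ : SpecialLinearGroup.toGL B ∈ formStabilizer Φ := by
    rw [hB]
    exact (scalar_mul_mem_formStabilizer_iff hΦ (by rw [inv_pow, hum, inv_one]) A).mpr hA
  refine ⟨⟨⟨u, hum⟩, ⟨B, hBΦ⟩⟩, Subtype.ext ?_⟩
  change GeneralLinearGroup.scalar (Fin 2) u * SpecialLinearGroup.toGL B = A
  rw [hB, ← mul_assoc, ← map_mul, mul_inv_cancel, map_one, one_mul]

/-- If a binary form of degree `2 * m`, `m` odd, has only symmetries whose determinant is an `m`-th
root of unity, each of them is uniquely an `m`-th root of unity times a unimodular one. -/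
def rootsOfUnityProdEquivFormStabilizer (hΦ : Φ.IsHomogeneous (2 * m)) (hm : Odd m)
    (hdet : ∀ A ∈ formStabilizer Φ, GeneralLinearGroup.det A ^ m = 1) :
    rootsOfUnity m ℂ × unimodularStabilizer Φ ≃* formStabilizer Φ :=
  MulEquiv.ofBijective (rootsOfUnityProdToFormStabilizer hΦ)
    ⟨rootsOfUnityProdToFormStabilizer_injective hΦ hm,
      rootsOfUnityProdToFormStabilizer_surjective hΦ hm hdet⟩

end Splitting

section EdgeForm

/-- Klein's icosahedral form of degree 30, the paper's `F₃₀`: its zeros are the midpoints of the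
edges of a regular icosahedron inscribed in the Riemann sphere. -/
def edgeForm : MvPolynomial (Fin 2) ℂ :=
  X 0 ^ 30 + 522 * (X 0 ^ 25 * X 1 ^ 5 - X 0 ^ 5 * X 1 ^ 25)
    - 10005 * (X 0 ^ 20 * X 1 ^ 10 + X 0 ^ 10 * X 1 ^ 20) + X 1 ^ 30

lemma eval_edgeForm (x y : ℂ) :
    eval ![x, y] edgeForm = x ^ 30 + 522 * (x ^ 25 * y ^ 5 - x ^ 5 * y ^ 25)
      - 10005 * (x ^ 20 * y ^ 10 + x ^ 10 * y ^ 20) + y ^ 30 := by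
  simp [edgeForm]

lemma cyclicCover_edgeForm : cyclicCover 30 edgeForm = G30 := by
  simp only [cyclicCover, edgeForm, G30, map_add, map_sub, map_mul, map_pow, rename_X, map_ofNat,
    Fin.castSucc_zero, Fin.castSucc_one]

lemma isHomogeneous_edgeForm : edgeForm.IsHomogeneous 30 := by
  have hX (i j : ℕ) : (X 0 ^ i * X 1 ^ j : MvPolynomial (Fin 2) ℂ).IsHomogeneous (i + j) :=
    (isHomogeneous_X_pow 0 i).mul (isHomogeneous_X_pow 1 j)
  have hC (c : ℂ) {p : MvPolynomial (Fin 2) ℂ} (hp : p.IsHomogeneous 30) :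
      (C c * p).IsHomogeneous 30 := by
    simpa using (isHomogeneous_C _ c).mul hp
  exact (((isHomogeneous_X_pow 0 30).add (hC 522 ((hX 25 5).sub (hX 5 25)))).sub
    (hC 10005 ((hX 20 10).add (hX 10 20)))).add (isHomogeneous_X_pow 1 30)

lemma dirDeriv_edgeForm (c d : ℂ) :
    dirDeriv ![c, d] edgeForm =
      C c * (30 * X 0 ^ 29 + 522 * (25 * X 0 ^ 24 * X 1 ^ 5 - 5 * X 0 ^ 4 * X 1 ^ 25)
        - 10005 * (20 * X 0 ^ 19 * X 1 ^ 10 + 10 * X 0 ^ 9 * X 1 ^ 20)) +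
      C d * (522 * (5 * X 0 ^ 25 * X 1 ^ 4 - 25 * X 0 ^ 5 * X 1 ^ 24)
        - 10005 * (10 * X 0 ^ 20 * X 1 ^ 9 + 20 * X 0 ^ 10 * X 1 ^ 19) + 30 * X 1 ^ 29) := by
  simp only [edgeForm, map_add, map_sub, Derivation.leibniz, Derivation.leibniz_pow, dirDeriv_X,
    dirDeriv_ofNat, smul_eq_mul, nsmul_eq_mul, Nat.cast_ofNat, Nat.add_one_sub_one, cons_val_zero,
    cons_val_one]
  ring

lemma eval_dirDeriv_edgeForm (c d x y : ℂ) :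
    eval ![x, y] (dirDeriv ![c, d] edgeForm) =
      c * (30 * x ^ 29 + 522 * (25 * x ^ 24 * y ^ 5 - 5 * x ^ 4 * y ^ 25)
        - 10005 * (20 * x ^ 19 * y ^ 10 + 10 * x ^ 9 * y ^ 20)) +
      d * (522 * (5 * x ^ 25 * y ^ 4 - 25 * x ^ 5 * y ^ 24)
        - 10005 * (10 * x ^ 20 * y ^ 9 + 20 * x ^ 10 * y ^ 19) + 30 * y ^ 29) := by
  simp [dirDeriv_edgeForm]

lemma iterate_dirDeriv_edgeForm_two (c d : ℂ) :
    (dirDeriv ![c, d])^[2] edgeForm =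
      C (c ^ 2) * (870 * X 0 ^ 28 + 522 * (600 * X 0 ^ 23 * X 1 ^ 5 - 20 * X 0 ^ 3 * X 1 ^ 25)
        - 10005 * (380 * X 0 ^ 18 * X 1 ^ 10 + 90 * X 0 ^ 8 * X 1 ^ 20)) +
      2 * C (c * d) * (522 * (125 * X 0 ^ 24 * X 1 ^ 4 - 125 * X 0 ^ 4 * X 1 ^ 24)
        - 10005 * (200 * X 0 ^ 19 * X 1 ^ 9 + 200 * X 0 ^ 9 * X 1 ^ 19)) +
      C (d ^ 2) * (522 * (20 * X 0 ^ 25 * X 1 ^ 3 - 600 * X 0 ^ 5 * X 1 ^ 23)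
        - 10005 * (90 * X 0 ^ 20 * X 1 ^ 8 + 380 * X 0 ^ 10 * X 1 ^ 18) + 870 * X 1 ^ 28) := by
  rw [Function.iterate_succ_apply', Function.iterate_one, dirDeriv_edgeForm]
  simp only [map_add, map_sub, Derivation.leibniz, Derivation.leibniz_pow, dirDeriv_X,
    dirDeriv_ofNat, derivation_C, smul_eq_mul, nsmul_eq_mul, Nat.cast_ofNat, Nat.add_one_sub_one,
    cons_val_zero, cons_val_one, C_pow, C_mul]
  ring

/-- Klein's form of degree 12, which vanishes at the vertices of the icosahedron. -/
def vertexForm (x y : ℂ) : ℂ :=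
  x * y * (x ^ 10 + 11 * x ^ 5 * y ^ 5 - y ^ 10)

/-- Klein's form of degree 20, which vanishes at the face centres of the icosahedron. -/
def faceForm (x y : ℂ) : ℂ :=
  -(x ^ 20 + y ^ 20) + 228 * (x ^ 15 * y ^ 5 - x ^ 5 * y ^ 15) - 494 * x ^ 10 * y ^ 10

/-- The direction, unique up to scaling, in which `edgeForm` is stationary at `(x, y)`. -/
def edgeTangent (x y : ℂ) : Fin 2 → ℂ :=
  ![-eval ![x, y] (dirDeriv ![0, 1] edgeForm), eval ![x, y] (dirDeriv ![1, 0] edgeForm)]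

lemma eval_iterate_dirDeriv_edgeTangent_two (x y : ℂ) :
    eval ![x, y] ((dirDeriv (edgeTangent x y))^[2] edgeForm) =
      -9396000 * (vertexForm x y ^ 3 * faceForm x y * eval ![x, y] edgeForm) := by
  simp only [edgeTangent, iterate_dirDeriv_edgeForm_two, eval_dirDeriv_edgeForm, eval_edgeForm,
    vertexForm, faceForm, map_add, map_sub, map_mul, map_pow, eval_C, eval_X, eval_ofNat,
    cons_val_zero, cons_val_one]
  ring

lemma eval_iterate_dirDeriv_edgeTangent_three (x y : ℂ) :
    eval ![x, y] ((dirDeriv (edgeTangent x y))^[3] edgeForm) =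
      -845640000 * (vertexForm x y ^ 2 * (960 * vertexForm x y ^ 5 + faceForm x y ^ 3) *
        eval ![x, y] edgeForm) := by
  rw [edgeTangent, Function.iterate_succ_apply', iterate_dirDeriv_edgeForm_two]
  simp only [map_add, map_sub, Derivation.leibniz, Derivation.leibniz_pow, dirDeriv_X,
    dirDeriv_ofNat, derivation_C, smul_eq_mul, nsmul_eq_mul, Nat.cast_ofNat, Nat.add_one_sub_one,
    eval_dirDeriv_edgeForm, eval_edgeForm, vertexForm, faceForm, map_mul, map_pow, map_zero,
    eval_C, eval_X, eval_ofNat, cons_val_zero, cons_val_one]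
  ring

lemma smul_eq_smul_edgeTangent {c d x y : ℂ} (h : eval ![x, y] (dirDeriv ![c, d] edgeForm) = 0) :
    (30 * eval ![x, y] edgeForm) • ![c, d] = (x * d - y * c) • edgeTangent x y := by
  rw [eval_dirDeriv_edgeForm] at h
  ext i
  fin_cases i
  · simp only [edgeTangent, eval_dirDeriv_edgeForm, eval_edgeForm, Fin.zero_eta, Pi.smul_apply,
      smul_eq_mul, cons_val_zero]
    linear_combination x * h
  · simp only [edgeTangent, eval_dirDeriv_edgeForm, eval_edgeForm, Fin.mk_one, Pi.smul_apply,
      smul_eq_mul, cons_val_one, cons_val_fin_one]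
    linear_combination y * h

section Symmetry

variable {M : Matrix (Fin 2) (Fin 2) ℂ}

lemma eval_iterate_dirDeriv_columns (hM : ∀ v, eval (M *ᵥ v) edgeForm = eval v edgeForm) (k : ℕ) :
    eval ![M 0 0, M 1 0] ((dirDeriv ![M 0 1, M 1 1])^[k] edgeForm) =
      eval ![1, 0] ((dirDeriv ![0, 1])^[k] edgeForm) := by
  have hcol₁ : M *ᵥ ![1, 0] = ![M 0 0, M 1 0] := by ext i; fin_cases i <;> simp [mulVec, dotProduct]
  have hcol₂ : M *ᵥ ![0, 1] = ![M 0 1, M 1 1] := by ext i; fin_cases i <;> simp [mulVec, dotProduct]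
  have h := eval_iterate_dirDeriv_of_eval_mulVec (c := (1 : ℂ)) (by simpa using hM)
    ![1, 0] ![0, 1] k
  rwa [hcol₁, hcol₂, one_mul] at h

lemma eval_edgeForm_column (hM : ∀ v, eval (M *ᵥ v) edgeForm = eval v edgeForm) :
    eval ![M 0 0, M 1 0] edgeForm = 1 := by
  simpa [eval_edgeForm] using eval_iterate_dirDeriv_columns hM 0

lemma smul_column_eq_smul_edgeTangent (hM : ∀ v, eval (M *ᵥ v) edgeForm = eval v edgeForm) :
    (30 : ℂ) • ![M 0 1, M 1 1] = M.det • edgeTangent (M 0 0) (M 1 0) := by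
  have h := smul_eq_smul_edgeTangent
    ((eval_iterate_dirDeriv_columns hM 1).trans (by simp [dirDeriv_edgeForm]))
  rwa [eval_edgeForm_column hM, mul_one, mul_comm (M 1 0), ← det_fin_two] at h

/-- The column `M e₁` must have the same Taylor data along `M e₂` as `e₁` along `e₂`, where
`edgeForm` is `1 + O(t⁵)`; the first three derivatives already force it to be a vertex. -/
lemma vertexForm_eq_zero_of_eval_mulVec (hdet : M.det ≠ 0)
    (hM : ∀ v, eval (M *ᵥ v) edgeForm = eval v edgeForm) : vertexForm (M 0 0) (M 1 0) = 0 := by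
  have hderiv (k : ℕ) (hk : eval ![1, 0] ((dirDeriv ![0, 1])^[k] edgeForm) = 0) :
      eval ![M 0 0, M 1 0] ((dirDeriv (edgeTangent (M 0 0) (M 1 0)))^[k] edgeForm) = 0 := by
    refine (mul_eq_zero.mp ?_).resolve_left (pow_ne_zero k hdet)
    rw [← smul_eval, ← iterate_dirDeriv_smul, ← smul_column_eq_smul_edgeTangent hM,
      iterate_dirDeriv_smul, smul_eval, eval_iterate_dirDeriv_columns hM, hk, mul_zero]
  have h2 := hderiv 2 (by simp [iterate_dirDeriv_edgeForm_two])
  have h3 := hderiv 3 (by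
    rw [Function.iterate_succ_apply', iterate_dirDeriv_edgeForm_two]
    simp [Derivation.leibniz, Derivation.leibniz_pow, dirDeriv_X, dirDeriv_ofNat])
  rw [eval_iterate_dirDeriv_edgeTangent_two, eval_edgeForm_column hM] at h2
  rw [eval_iterate_dirDeriv_edgeTangent_three, eval_edgeForm_column hM] at h3
  by_contra hf
  have hface : faceForm (M 0 0) (M 1 0) = 0 := by simpa [hf] using h2
  simp [hf, hface] at h3

lemma diagonal_of_eval_mulVec (hM : ∀ v, eval (M *ᵥ v) edgeForm = eval v edgeForm)
    (h10 : M 1 0 = 0) : M 0 1 = 0 ∧ M 0 0 ^ 30 = 1 ∧ M 0 0 ^ 5 = M 1 1 ^ 5 := by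
  have hcol := eval_edgeForm_column hM
  rw [h10, eval_edgeForm] at hcol
  have h30 : M 0 0 ^ 30 = 1 := by linear_combination hcol
  have h01 : M 0 1 = 0 := by
    have h := congrFun (smul_column_eq_smul_edgeTangent hM) 0
    simpa [edgeTangent, h10, eval_dirDeriv_edgeForm] using h
  have hval (t : ℂ) : eval ![M 0 0, M 1 1 * t] edgeForm = eval ![1, t] edgeForm := by
    rw [← hM ![1, t], eq_vec2 (M *ᵥ _)]
    simp [mulVec, dotProduct, h10, h01]
  simp only [eval_edgeForm] at hval
  have h255 : M 0 0 ^ 25 * M 1 1 ^ 5 = 1 := by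
    linear_combination (2 ^ 25 * (hval 1 - hval (-1)) - (hval 2 - hval (-2))) /
      (2 ^ 25 - 2 ^ 5) / 1044
  have h00 : M 0 0 ^ 25 ≠ 0 := by
    intro h
    rw [h, zero_mul] at h255
    exact zero_ne_one h255
  refine ⟨h01, h30, mul_left_cancel₀ h00 ?_⟩
  rw [h255, ← pow_add, h30]

end Symmetry

lemma hasNondegeneratePolars_edgeForm : HasNondegeneratePolars 30 edgeForm := by
  intro w ℓ c h
  have hpoly : Polynomial.C (w 0) * (30 + 522 * (25 * Polynomial.X ^ 5 - 5 * Polynomial.X ^ 25)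
        - 10005 * (20 * Polynomial.X ^ 10 + 10 * Polynomial.X ^ 20)) +
      Polynomial.C (w 1) * (522 * (5 * Polynomial.X ^ 4 - 25 * Polynomial.X ^ 24)
        - 10005 * (10 * Polynomial.X ^ 9 + 20 * Polynomial.X ^ 19) + 30 * Polynomial.X ^ 29) =
      Polynomial.C c *
        ((Polynomial.X + Polynomial.C (ℓ 0)) ^ 29).comp (Polynomial.C (ℓ 1) * Polynomial.X) := by
    refine Polynomial.funext fun t ↦ ?_
    have ht := h ![1, t]
    rw [eq_vec2 w, eval_dirDeriv_edgeForm] at ht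
    simp only [Polynomial.eval_add, Polynomial.eval_sub, Polynomial.eval_mul, Polynomial.eval_pow,
      Polynomial.eval_comp, Polynomial.eval_C, Polynomial.eval_X, Polynomial.eval_ofNat]
    simp only [dotProduct, Fin.sum_univ_two, cons_val_zero, cons_val_one] at ht
    linear_combination ht
  have hcoeff (k : ℕ) := congrArg (Polynomial.coeff · k) hpoly
  simp only [Polynomial.coeff_C_mul, Polynomial.comp_C_mul_X_coeff,
    Polynomial.coeff_X_add_C_pow] at hcoeff
  have h1 : c = 0 ∨ ℓ 0 = 0 ∨ ℓ 1 = 0 := by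
    simpa [mul_add, mul_sub, Polynomial.coeff_X_pow] using hcoeff 1
  have h4 : w 1 * (522 * 5) = c * (ℓ 0 ^ 25 * Nat.choose 29 4 * ℓ 1 ^ 4) := by
    simpa [mul_add, mul_sub, Polynomial.coeff_X_pow] using hcoeff 4
  have h5 : w 0 * (522 * 25) = c * (ℓ 0 ^ 24 * Nat.choose 29 5 * ℓ 1 ^ 5) := by
    simpa [mul_add, mul_sub, Polynomial.coeff_X_pow] using hcoeff 5
  have hw : w 0 = 0 ∧ w 1 = 0 := by
    rcases h1 with h | h | h <;> simp_all
  rw [eq_vec2 w, hw.1, hw.2]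
  simp

end EdgeForm

section GoldenRatio

variable {φ : ℂ}

/- `a`, `d` and `x² + y²` vanish at the edge midpoints on three mutually orthogonal axes. The other
24 midpoints form three orbits under the half-turns about these axes and the antipodal map, and
each of the three quartics in `a`, `d` vanishes on one of them. -/
lemma eval_edgeForm_eq_mul_of_golden (hφ : φ ^ 2 = φ + 1) {x y a d : ℂ}
    (ha : a = x ^ 2 + 2 * φ * x * y - y ^ 2) (hd : d = φ * (x ^ 2 - y ^ 2) - 2 * x * y) :
    20480 * (13 * φ + 8) * eval ![x, y] edgeForm = a * d * (x ^ 2 + y ^ 2) *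
      (5 * (φ + 1) * a ^ 4 + 6 * a ^ 2 * d ^ 2 + 5 * (2 - φ) * d ^ 4) *
      ((5 * (2 - φ) * a ^ 4 + (14 - 10 * φ) * a ^ 2 * d ^ 2 + 9 * d ^ 4) *
      (9 * a ^ 4 + (10 * φ + 4) * a ^ 2 * d ^ 2 + 5 * (φ + 1) * d ^ 4)) := by
  obtain ⟨p₂, hp₂⟩ : ∃ p, p = x ^ 8 - (2 + 2 * φ) * x ^ 7 * y + (5 + 2 * φ) * x ^ 6 * y ^ 2
    + (4 + 6 * φ) * x ^ 5 * y ^ 3 - (1 + 8 * φ) * x ^ 4 * y ^ 4 - (4 + 6 * φ) * x ^ 3 * y ^ 5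
    + (5 + 2 * φ) * x ^ 2 * y ^ 6 + (2 + 2 * φ) * x * y ^ 7 + y ^ 8 := ⟨_, rfl⟩
  obtain ⟨p₃, hp₃⟩ : ∃ p, p = x ^ 8 - (4 - 2 * φ) * x ^ 7 * y + (7 - 2 * φ) * x ^ 6 * y ^ 2
    + (10 - 6 * φ) * x ^ 5 * y ^ 3 - (9 - 8 * φ) * x ^ 4 * y ^ 4 - (10 - 6 * φ) * x ^ 3 * y ^ 5
    + (7 - 2 * φ) * x ^ 2 * y ^ 6 + (4 - 2 * φ) * x * y ^ 7 + y ^ 8 := ⟨_, rfl⟩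
  have haxes : a * d * (x ^ 2 + y ^ 2) = φ *
      (x ^ 6 + 2 * x ^ 5 * y - 5 * x ^ 4 * y ^ 2 - 5 * x ^ 2 * y ^ 4 - 2 * x * y ^ 5 + y ^ 6) := by
    grind
  have h₁ : 5 * (φ + 1) * a ^ 4 + 6 * a ^ 2 * d ^ 2 + 5 * (2 - φ) * d ^ 4 = 16 * (φ + 1) *
      (x ^ 8 + 4 * x ^ 7 * y + 17 * x ^ 6 * y ^ 2 + 22 * x ^ 5 * y ^ 3 + 5 * x ^ 4 * y ^ 4
        - 22 * x ^ 3 * y ^ 5 + 17 * x ^ 2 * y ^ 6 - 4 * x * y ^ 7 + y ^ 8) := by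
    grind
  have h₂ : 5 * (2 - φ) * a ^ 4 + (14 - 10 * φ) * a ^ 2 * d ^ 2 + 9 * d ^ 4 =
      16 * (φ + 2) * p₂ := by
    grind
  have h₃ : 9 * a ^ 4 + (10 * φ + 4) * a ^ 2 * d ^ 2 + 5 * (φ + 1) * d ^ 4 =
      16 * (4 * φ + 3) * p₃ := by
    grind
  have h₂₃ : p₂ * p₃ = x ^ 16 - 6 * x ^ 15 * y + 16 * x ^ 14 * y ^ 2 - 12 * x ^ 13 * y ^ 3
      + 9 * x ^ 12 * y ^ 4 + 30 * x ^ 11 * y ^ 5 + 8 * x ^ 10 * y ^ 6 - 24 * x ^ 9 * y ^ 7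
      - 7 * x ^ 8 * y ^ 8 + 24 * x ^ 7 * y ^ 9 + 8 * x ^ 6 * y ^ 10 - 30 * x ^ 5 * y ^ 11
      + 9 * x ^ 4 * y ^ 12 + 12 * x ^ 3 * y ^ 13 + 16 * x ^ 2 * y ^ 14 + 6 * x * y ^ 15
      + y ^ 16 := by
    clear ha hd haxes h₁ h₂ h₃
    grind
  have hconst : 20480 * (13 * φ + 8) =
      φ * (16 * (φ + 1)) * (16 * (φ + 2) * (16 * (4 * φ + 3))) := by
    grind
  rw [haxes, h₁, h₂, h₃, mul_mul_mul_comm (16 * (φ + 2)), h₂₃, hconst, eval_edgeForm]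
  ring

lemma eval_edgeForm_of_golden (hφ : φ ^ 2 = φ + 1) (x y : ℂ) :
    eval ![-φ * x + y, x + φ * y] edgeForm = -(φ + 2) ^ 15 * eval ![x, y] edgeForm := by
  have hφ7 : φ ^ 7 = 13 * φ + 8 := by grind
  have hne : 20480 * (13 * φ + 8) ≠ 0 := by
    rw [← hφ7]
    refine mul_ne_zero (by norm_num) (pow_ne_zero 7 ?_)
    rintro rfl
    norm_num at hφ
  refine mul_left_cancel₀ hne ?_
  obtain ⟨a, ha⟩ : ∃ a, a = x ^ 2 + 2 * φ * x * y - y ^ 2 := ⟨_, rfl⟩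
  obtain ⟨d, hd⟩ : ∃ d, d = φ * (x ^ 2 - y ^ 2) - 2 * x * y := ⟨_, rfl⟩
  have ha' : -(φ + 2) * a = (-φ * x + y) ^ 2
      + 2 * φ * (-φ * x + y) * (x + φ * y) - (x + φ * y) ^ 2 := by
    grind
  have hd' : (φ + 2) * d =
      φ * ((-φ * x + y) ^ 2 - (x + φ * y) ^ 2) - 2 * (-φ * x + y) * (x + φ * y) := by
    grind
  have hsq : (-φ * x + y) ^ 2 + (x + φ * y) ^ 2 = (φ + 2) * (x ^ 2 + y ^ 2) := by grind
  rw [eval_edgeForm_eq_mul_of_golden hφ ha' hd', hsq, mul_left_comm (20480 * (13 * φ + 8)),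
    eval_edgeForm_eq_mul_of_golden hφ ha hd]
  generalize x ^ 2 + y ^ 2 = e
  ring

end GoldenRatio

section IcosahedralGroup

open scoped MatrixGroups

variable {ζ : ℂ}

/-- Minus a Gauss period of the fifth root of unity `ζ`: a root of `φ² = φ + 1`. -/
def goldenRoot (ζ : ℂ) : ℂ := -(ζ ^ 2 + ζ ^ 3)

lemma sum_pow_eq_zero_of_isPrimitiveRoot_five (hζ : IsPrimitiveRoot ζ 5) :
    1 + ζ + ζ ^ 2 + ζ ^ 3 + ζ ^ 4 = 0 := by
  simpa [Finset.sum_range_succ] using hζ.geom_sum_eq_zero (by norm_num)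

lemma goldenRoot_sq (hζ : IsPrimitiveRoot ζ 5) : goldenRoot ζ ^ 2 = goldenRoot ζ + 1 := by
  have h := sum_pow_eq_zero_of_isPrimitiveRoot_five hζ
  rw [goldenRoot]
  linear_combination (ζ ^ 2 + ζ - 1) * h

lemma goldenRoot_add_two (hζ : IsPrimitiveRoot ζ 5) :
    goldenRoot ζ + 2 = -(ζ - ζ ^ 4) ^ 2 := by
  have h := hζ.pow_eq_one
  rw [goldenRoot]
  linear_combination (ζ ^ 3 - 2) * h

lemma sub_pow_four_ne_zero (hζ : IsPrimitiveRoot ζ 5) : ζ - ζ ^ 4 ≠ 0 := by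
  intro h
  have h4 : 4 = 1 :=
    hζ.pow_inj (i := 4) (j := 1) (by norm_num) (by norm_num) (by linear_combination -h)
  norm_num at h4

lemma goldenRoot_sq_add_one_mul (hζ : IsPrimitiveRoot ζ 5) :
    (goldenRoot ζ ^ 2 + 1) * (ζ - ζ ^ 4)⁻¹ ^ 2 = -1 := by
  have hδ := sub_pow_four_ne_zero hζ
  have h : goldenRoot ζ ^ 2 + 1 = -(ζ - ζ ^ 4) ^ 2 := by
    rw [goldenRoot_sq hζ, ← goldenRoot_add_two hζ]
    ring
  rw [h, neg_mul, ← mul_pow, mul_inv_cancel₀ hδ, one_pow]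

/-- Rotation of order five of the icosahedron about the axis joining the vertices `0` and `∞`. -/
def vertexRotation (hζ : IsPrimitiveRoot ζ 5) : SL(2, ℂ) :=
  ⟨!![ζ ^ 3, 0; 0, ζ ^ 2], by rw [det_fin_two_of]; linear_combination hζ.pow_eq_one⟩

/-- A half-turn of the icosahedron interchanging the vertices `0` and `∞`. -/
def poleSwap : SL(2, ℂ) :=
  ⟨!![0, 1; -1, 0], by rw [det_fin_two_of]; ring⟩

/-- A half-turn of the icosahedron carrying the vertex `∞` to an adjacent one. -/
def edgeHalfTurn (hζ : IsPrimitiveRoot ζ 5) : SL(2, ℂ) :=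
  ⟨(ζ - ζ ^ 4)⁻¹ • !![-goldenRoot ζ, 1; 1, goldenRoot ζ], by
    rw [det_smul, det_fin_two_of, Fintype.card_fin]
    linear_combination -goldenRoot_sq_add_one_mul hζ⟩

lemma coe_poleSwap : (poleSwap : Matrix (Fin 2) (Fin 2) ℂ) = !![0, 1; -1, 0] := rfl

lemma coe_edgeHalfTurn (hζ : IsPrimitiveRoot ζ 5) :
    (edgeHalfTurn hζ : Matrix (Fin 2) (Fin 2) ℂ) =
      (ζ - ζ ^ 4)⁻¹ • !![-goldenRoot ζ, 1; 1, goldenRoot ζ] := rfl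

lemma coe_vertexRotation (hζ : IsPrimitiveRoot ζ 5) :
    (vertexRotation hζ : Matrix (Fin 2) (Fin 2) ℂ) = !![ζ ^ 3, 0; 0, ζ ^ 2] := rfl

lemma coe_vertexRotation_pow (hζ : IsPrimitiveRoot ζ 5) (k : ℕ) :
    (vertexRotation hζ : Matrix (Fin 2) (Fin 2) ℂ) ^ k =
      !![(ζ ^ 3) ^ k, 0; 0, (ζ ^ 2) ^ k] := by
  rw [coe_vertexRotation]
  induction k with
  | zero => simp [one_fin_two]
  | succ k ih => simp only [pow_succ _ k, ih, mul_fin_two, mul_zero, zero_mul, add_zero, zero_add]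

lemma vertexRotation_mem (hζ : IsPrimitiveRoot ζ 5) :
    vertexRotation hζ ∈ unimodularStabilizer edgeForm := by
  refine mem_unimodularStabilizer_iff.mpr fun v ↦ ?_
  have hmul : (vertexRotation hζ).val *ᵥ v = ![ζ ^ 3 * v 0, ζ ^ 2 * v 1] := by
    ext i
    fin_cases i <;> simp [vertexRotation, mulVec, dotProduct]
  have h5 := hζ.pow_eq_one
  rw [hmul, eq_vec2 v, eval_edgeForm, eval_edgeForm]
  simp only [cons_val_zero, cons_val_one]
  grind

lemma poleSwap_mem : poleSwap ∈ unimodularStabilizer edgeForm := by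
  refine mem_unimodularStabilizer_iff.mpr fun v ↦ ?_
  have hmul : poleSwap.val *ᵥ v = ![v 1, -v 0] := by
    ext i
    fin_cases i <;> simp [poleSwap, mulVec, dotProduct]
  rw [hmul, eq_vec2 v, eval_edgeForm, eval_edgeForm]
  simp only [cons_val_zero, cons_val_one]
  ring

lemma edgeHalfTurn_mem (hζ : IsPrimitiveRoot ζ 5) :
    edgeHalfTurn hζ ∈ unimodularStabilizer edgeForm := by
  refine mem_unimodularStabilizer_iff.mpr fun v ↦ ?_
  have hmul : (edgeHalfTurn hζ).val *ᵥ v =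
      (ζ - ζ ^ 4)⁻¹ • ![-goldenRoot ζ * v 0 + v 1, v 0 + goldenRoot ζ * v 1] := by
    rw [edgeHalfTurn, smul_mulVec]
    congr 1
    ext i
    fin_cases i <;> simp [mulVec, dotProduct]
  have hscale : (ζ - ζ ^ 4)⁻¹ ^ 30 * -(goldenRoot ζ + 2) ^ 15 = 1 := by
    rw [goldenRoot_add_two hζ, Odd.neg_pow (by decide), neg_neg, ← pow_mul, ← mul_pow,
      inv_mul_cancel₀ (sub_pow_four_ne_zero hζ), one_pow]
  rw [hmul, eval_smul_of_isHomogeneous_s6 isHomogeneous_edgeForm,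
    eval_edgeForm_of_golden (goldenRoot_sq hζ), ← mul_assoc, hscale, one_mul, ← eq_vec2]

/-- Icosahedral substitutions carrying the vertex `∞`, of homogeneous coordinates `(1 : 0)`, to
each of the twelve vertices. -/
def vertexTransport (hζ : IsPrimitiveRoot ζ 5) : Option (Fin 5) × Fin 2 → SL(2, ℂ)
  | (none, j) => poleSwap ^ j.val
  | (some k, j) => vertexRotation hζ ^ k.val * edgeHalfTurn hζ * poleSwap ^ j.val

lemma vertexTransport_mem (hζ : IsPrimitiveRoot ζ 5) (i : Option (Fin 5) × Fin 2) :
    vertexTransport hζ i ∈ unimodularStabilizer edgeForm := by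
  match i with
  | (none, j) => exact pow_mem poleSwap_mem _
  | (some k, j) =>
    exact mul_mem (mul_mem (pow_mem (vertexRotation_mem hζ) _) (edgeHalfTurn_mem hζ))
      (pow_mem poleSwap_mem _)

lemma exists_eq_pow_mul_of_pow_eq_pow {K : Type*} [Field K] {n : ℕ} [NeZero n] {ζ u v : K}
    (hζ : IsPrimitiveRoot ζ n) (h : u ^ n = v ^ n) : ∃ k : Fin n, u = ζ ^ k.val * v := by
  rcases eq_or_ne v 0 with rfl | hv
  · exact ⟨0, by simpa [NeZero.ne n] using h⟩
  · obtain ⟨k, hk, huv⟩ := hζ.eq_pow_of_pow_eq_one (ξ := u / v)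
      (by rw [div_pow, h, div_self (pow_ne_zero n hv)])
    exact ⟨⟨k, hk⟩, by rw [huv, div_mul_cancel₀ u hv]⟩

lemma eq_of_vertexForm_eq_zero_of_golden {φ : ℂ} (hφ : φ ^ 2 = φ + 1) {x y : ℂ}
    (h : vertexForm x y = 0) :
    x = 0 ∨ y = 0 ∨ x ^ 5 = (-φ * y) ^ 5 ∨ (φ * x) ^ 5 = y ^ 5 := by
  have hfactor : x * y * ((x ^ 5 - (-φ * y) ^ 5) * ((φ * x) ^ 5 - y ^ 5)) =
      φ ^ 5 * vertexForm x y := by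
    rw [vertexForm]
    grind
  simpa [h, sub_eq_zero, or_assoc] using hfactor

lemma exists_vertexTransport_column (hζ : IsPrimitiveRoot ζ 5) {x y : ℂ}
    (h : vertexForm x y = 0) :
    ∃ i, (vertexTransport hζ i) 0 0 * y = (vertexTransport hζ i) 1 0 * x := by
  rcases eq_of_vertexForm_eq_zero_of_golden (goldenRoot_sq hζ) h with rfl | rfl | h | h
  · exact ⟨(none, 1), by simp [vertexTransport, coe_poleSwap]⟩
  · exact ⟨(none, 0), by simp [vertexTransport]⟩
  · obtain ⟨k, rfl⟩ := exists_eq_pow_mul_of_pow_eq_pow hζ h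
    refine ⟨(some k, 0), ?_⟩
    simp only [vertexTransport, Matrix.SpecialLinearGroup.coe_mul,
      Matrix.SpecialLinearGroup.coe_pow, coe_vertexRotation_pow, coe_edgeHalfTurn, Fin.val_zero,
      pow_zero, mul_one, Matrix.mul_smul, mul_fin_two, Matrix.smul_apply, of_apply, cons_val',
      cons_val_zero, cons_val_one, cons_val_fin_one, smul_eq_mul]
    ring
  · obtain ⟨k, hk⟩ := exists_eq_pow_mul_of_pow_eq_pow hζ h
    refine ⟨(some k, 1), ?_⟩
    simp only [vertexTransport, Matrix.SpecialLinearGroup.coe_mul,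
      Matrix.SpecialLinearGroup.coe_pow, coe_vertexRotation_pow, coe_edgeHalfTurn, coe_poleSwap,
      Fin.val_one, pow_one, Matrix.mul_smul, Matrix.smul_mul, mul_fin_two, Matrix.smul_apply,
      of_apply, cons_val', cons_val_zero, cons_val_one, cons_val_fin_one, smul_eq_mul]
    linear_combination (ζ ^ 2) ^ k.val * (ζ - ζ ^ 4)⁻¹ * hk

lemma exists_eq_vertexTransport_mul_diagonal (hζ : IsPrimitiveRoot ζ 5)
    {M : Matrix (Fin 2) (Fin 2) ℂ} (hdet : M.det ≠ 0)
    (hM : ∀ v, eval (M *ᵥ v) edgeForm = eval v edgeForm) :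
    ∃ i, ∃ a d : ℂ,
      M = (vertexTransport hζ i).val * !![a, 0; 0, d] ∧ a ^ 30 = 1 ∧ a ^ 5 = d ^ 5 := by
  obtain ⟨i, hi⟩ := exists_vertexTransport_column hζ (vertexForm_eq_zero_of_eval_mulVec hdet hM)
  set T := vertexTransport hζ i
  set N : Matrix (Fin 2) (Fin 2) ℂ := (T⁻¹).val * M with hN
  have hMN : M = T.val * N := by
    rw [hN, ← mul_assoc, ← Matrix.SpecialLinearGroup.coe_mul, mul_inv_cancel,
      Matrix.SpecialLinearGroup.coe_one, one_mul]
  have hN10 : N 1 0 = 0 := by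
    rw [hN, Matrix.SpecialLinearGroup.coe_inv, adjugate_fin_two, mul_apply, Fin.sum_univ_two]
    simp only [of_apply, cons_val', cons_val_zero, cons_val_one, cons_val_fin_one]
    linear_combination hi
  have hNinv (v : Fin 2 → ℂ) : eval (N *ᵥ v) edgeForm = eval v edgeForm := by
    rw [hN, ← mulVec_mulVec,
      mem_unimodularStabilizer_iff.mp (inv_mem (vertexTransport_mem hζ i)), hM]
  obtain ⟨hN01, h30, h5⟩ := diagonal_of_eval_mulVec hNinv hN10
  have hNdiag : N = !![N 0 0, 0; 0, N 1 1] := (eta_fin_two N).trans (by rw [hN01, hN10])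
  exact ⟨i, N 0 0, N 1 1, by rw [← hNdiag, hMN], h30, h5⟩

lemma det_pow_eq_one_of_mem_formStabilizer_edgeForm {A : GL (Fin 2) ℂ}
    (hA : A ∈ formStabilizer edgeForm) : GeneralLinearGroup.det A ^ 15 = 1 := by
  obtain ⟨i, a, d, hM, h30, h5⟩ := exists_eq_vertexTransport_mul_diagonal
    (Complex.isPrimitiveRoot_exp 5 (by norm_num)) (GeneralLinearGroup.det A).ne_zero hA
  have hdet : A.val.det = a * d := by
    rw [hM, det_mul, Matrix.SpecialLinearGroup.det_coe, det_fin_two_of]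
    ring
  have hpow : (a * d) ^ 15 = a ^ 30 := by
    linear_combination -a ^ 15 * (a ^ 10 + a ^ 5 * d ^ 5 + d ^ 10) * h5
  ext
  rw [Units.val_pow_eq_pow_val, Units.val_one, GeneralLinearGroup.val_det_apply, hdet, hpow, h30]

/-- The diagonal unimodular matrix with entries `l` and `l⁻¹`, for `l` a tenth root of unity. -/
def diagonalRotation (l : rootsOfUnity 10 ℂ) : SL(2, ℂ) :=
  ⟨!![l.val.val, 0; 0, l.val⁻¹.val], by
    rw [det_fin_two_of, Units.mul_inv, mul_zero, sub_zero]⟩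

lemma exists_vertexTransport_mul_diagonalRotation (hζ : IsPrimitiveRoot ζ 5) {B : SL(2, ℂ)}
    (hB : B ∈ unimodularStabilizer edgeForm) :
    ∃ i l, vertexTransport hζ i * diagonalRotation l = B := by
  obtain ⟨i, a, d, hM, -, h5⟩ := exists_eq_vertexTransport_mul_diagonal hζ
    (B.det_coe.symm ▸ one_ne_zero) (mem_unimodularStabilizer_iff.mp hB)
  have had : a * d = 1 := by
    simpa [det_mul] using (congrArg det hM).symm.trans B.det_coe
  have h10 : a ^ 10 = 1 := by
    calc a ^ 10 = a ^ 5 * d ^ 5 := by rw [← h5]; ring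
      _ = 1 := by rw [← mul_pow, had, one_pow]
  refine ⟨i, rootsOfUnity.mkOfPowEq a h10, Subtype.ext ?_⟩
  rw [hM, Matrix.SpecialLinearGroup.coe_mul]
  simp [diagonalRotation, eq_inv_of_mul_eq_one_right had]

lemma exists_injective_unimodularStabilizer_edgeForm (hζ : IsPrimitiveRoot ζ 5) :
    ∃ f : unimodularStabilizer edgeForm → (Option (Fin 5) × Fin 2) × rootsOfUnity 10 ℂ,
      Function.Injective f := by
  choose i l hil using fun B : unimodularStabilizer edgeForm ↦
    exists_vertexTransport_mul_diagonalRotation hζ B.2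
  refine ⟨fun B ↦ (i B, l B), fun B B' h ↦ Subtype.ext ?_⟩
  obtain ⟨hi, hl⟩ := Prod.mk.inj h
  rw [← hil B, ← hil B', hi, hl]

lemma finite_unimodularStabilizer_edgeForm : Finite (unimodularStabilizer edgeForm) := by
  obtain ⟨f, hf⟩ := exists_injective_unimodularStabilizer_edgeForm
    (Complex.isPrimitiveRoot_exp 5 (by norm_num))
  exact Finite.of_injective f hf

lemma card_unimodularStabilizer_edgeForm_le : Nat.card (unimodularStabilizer edgeForm) ≤ 120 := by
  obtain ⟨f, hf⟩ := exists_injective_unimodularStabilizer_edgeForm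
    (Complex.isPrimitiveRoot_exp 5 (by norm_num))
  calc Nat.card (unimodularStabilizer edgeForm)
      ≤ Nat.card ((Option (Fin 5) × Fin 2) × rootsOfUnity 10 ℂ) :=
        Nat.card_le_card_of_injective f hf
    _ = 120 := by
        simp only [Nat.card_prod, Finite.card_option, Nat.card_fin, Complex.card_rootsOfUnity]

end IcosahedralGroup

section Reduction

open scoped MatrixGroups
open ModularGroup

lemma nonempty_mulEquiv_of_injective_of_surjective {G H K : Type*} [Group G] [Group H] [Group K]
    [Finite G] {α : K →* G} (hα : Function.Injective α) {β : K →* H} (hβ : Function.Surjective β)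
    (hcard : Nat.card G ≤ Nat.card H) : Nonempty (G ≃* H) := by
  have : Finite K := Finite.of_injective α hα
  have hKG := Nat.card_le_card_of_injective α hα
  have hHK := Nat.card_le_card_of_surjective β hβ
  have hα' : Function.Bijective α :=
    (Nat.bijective_iff_injective_and_card α).mpr ⟨hα, by lia⟩
  have hβ' : Function.Bijective β :=
    (Nat.bijective_iff_surjective_and_card β).mpr ⟨hβ, by lia⟩
  exact ⟨(MulEquiv.ofBijective α hα').symm.trans (MulEquiv.ofBijective β hβ')⟩

lemma specialLinearGroup_map_intCast_surjective (p : ℕ) [Fact p.Prime] :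
    Function.Surjective
      (Matrix.SpecialLinearGroup.map (n := Fin 2) (Int.castRingHom (ZMod p))) := by
  refine Matrix.SL2.transvection_induction _ (fun i j h c ↦ ?_) ?_
  · refine ⟨Matrix.SpecialLinearGroup.transvection h c.val, Subtype.ext ?_⟩
    ext k l
    simp [Matrix.SpecialLinearGroup.transvection_coe, one_apply, single_apply, Matrix.add_apply]
  · rintro _ _ ⟨A, rfl⟩ ⟨B, rfl⟩
    exact ⟨A * B, map_mul _ A B⟩

lemma closure_map_S_T_eq_top (p : ℕ) [Fact p.Prime] :
    Subgroup.closure {Matrix.SpecialLinearGroup.map (Int.castRingHom (ZMod p)) S,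
      Matrix.SpecialLinearGroup.map (Int.castRingHom (ZMod p)) T} = ⊤ := by
  rw [← Set.image_pair, ← MonoidHom.map_closure, SpecialLinearGroup.SL2Z_generators,
    ← MonoidHom.range_eq_map]
  exact MonoidHom.range_eq_top.mpr (specialLinearGroup_map_intCast_surjective p)

lemma specialLinearGroup_map_injective {n R A : Type*} [Fintype n] [DecidableEq n] [CommRing R]
    [CommRing A] {f : R →+* A} (hf : Function.Injective f) :
    Function.Injective (Matrix.SpecialLinearGroup.map (n := n) f) :=
  fun _ _ h ↦ Subtype.ext (Matrix.map_injective hf (congrArg Subtype.val h))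

section CyclotomicEmbedding

variable {K : Type*} [Field K] {n : ℕ} [NeZero n] {ζ : K}

/-- The embedding of the ring of integers `ℤ[X]/(Φₙ)` of the `n`-th cyclotomic field sending the
generator to the primitive root of unity `ζ`. -/
def cyclotomicEmbedding (hζ : IsPrimitiveRoot ζ n) :
    AdjoinRoot (Polynomial.cyclotomic n ℤ) →+* K :=
  AdjoinRoot.lift (Int.castRingHom K) ζ <| by
    rw [← Polynomial.eval_map, Polynomial.map_cyclotomic]
    exact hζ.isRoot_cyclotomic (NeZero.pos n)

lemma cyclotomicEmbedding_root (hζ : IsPrimitiveRoot ζ n) :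
    cyclotomicEmbedding hζ (AdjoinRoot.root _) = ζ :=
  AdjoinRoot.lift_root _

lemma cyclotomicEmbedding_injective [CharZero K] (hζ : IsPrimitiveRoot ζ n) :
    Function.Injective (cyclotomicEmbedding hζ) := by
  refine (injective_iff_map_eq_zero _).mpr fun a ha ↦ ?_
  obtain ⟨f, rfl⟩ := AdjoinRoot.mk_surjective a
  rw [cyclotomicEmbedding, AdjoinRoot.lift_mk] at ha
  rw [AdjoinRoot.mk_eq_zero, Polynomial.cyclotomic_eq_minpoly hζ (NeZero.pos n)]
  exact minpoly.isIntegrallyClosed_dvd (hζ.isIntegral (NeZero.pos n)) ha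

end CyclotomicEmbedding

/-- Reduction modulo the prime `(1 - X)` above `p` of the ring of integers `ℤ[X]/(Φₚ)` of the
`p`-th cyclotomic field. -/
def cyclotomicReduction (p : ℕ) [Fact p.Prime] :
    AdjoinRoot (Polynomial.cyclotomic p ℤ) →+* ZMod p :=
  AdjoinRoot.lift (Int.castRingHom (ZMod p)) 1 <| by
    rw [← Polynomial.eval_map, Polynomial.map_cyclotomic, Polynomial.eval_one_cyclotomic_prime,
      CharP.cast_eq_zero]

lemma cyclotomicReduction_root (p : ℕ) [Fact p.Prime] :
    cyclotomicReduction p (AdjoinRoot.root _) = 1 :=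
  AdjoinRoot.lift_root _

lemma root_cyclotomic_pow_eq_one (n : ℕ) :
    AdjoinRoot.root (Polynomial.cyclotomic n ℤ) ^ n = 1 := by
  have h := AdjoinRoot.mk_eq_zero.mpr (Polynomial.cyclotomic.dvd_X_pow_sub_one n ℤ)
  rwa [map_sub, map_pow, map_one, AdjoinRoot.mk_X, sub_eq_zero] at h

/-- A common lift of `T`, modulo the prime above five, and of a conjugate of `vertexRotation`. -/
def cyclotomicT : SL(2, AdjoinRoot (Polynomial.cyclotomic 5 ℤ)) :=
  ⟨!![AdjoinRoot.root _ ^ 3, 1; 0, AdjoinRoot.root _ ^ 2], by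
    rw [det_fin_two_of]
    linear_combination root_cyclotomic_pow_eq_one 5⟩

lemma coe_cyclotomicT :
    cyclotomicT.val = !![AdjoinRoot.root _ ^ 3, 1; 0, AdjoinRoot.root _ ^ 2] := rfl

lemma specialLinearGroup_map_map_intCast {R A : Type*} [CommRing R] [CommRing A] (f : R →+* A)
    (g : SL(2, ℤ)) :
    Matrix.SpecialLinearGroup.map f (Matrix.SpecialLinearGroup.map (Int.castRingHom R) g) =
      Matrix.SpecialLinearGroup.map (Int.castRingHom A) g := by
  ext i j
  simp only [Matrix.SpecialLinearGroup.map_apply_coe, RingHom.mapMatrix_apply, map_apply,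
    eq_intCast, map_intCast]

lemma map_cyclotomicReduction_cyclotomicT [Fact (Nat.Prime 5)] :
    Matrix.SpecialLinearGroup.map (cyclotomicReduction 5) cyclotomicT =
      Matrix.SpecialLinearGroup.map (Int.castRingHom (ZMod 5)) T := by
  apply Subtype.ext
  rw [Matrix.SpecialLinearGroup.map_apply_coe, Matrix.SpecialLinearGroup.map_apply_coe,
    coe_cyclotomicT, coe_T]
  ext i j
  fin_cases i <;> fin_cases j <;> simp [cyclotomicReduction_root]

lemma coe_map_cyclotomicEmbedding_cyclotomicT {ζ : ℂ} (hζ : IsPrimitiveRoot ζ 5) :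
    (Matrix.SpecialLinearGroup.map (cyclotomicEmbedding hζ) cyclotomicT).val =
      !![ζ ^ 3, 1; 0, ζ ^ 2] := by
  rw [Matrix.SpecialLinearGroup.map_apply_coe, coe_cyclotomicT]
  ext i j
  fin_cases i <;> fin_cases j <;> simp [cyclotomicEmbedding_root]

lemma coe_map_intCast_S (R : Type*) [CommRing R] :
    (Matrix.SpecialLinearGroup.map (Int.castRingHom R) S).val = !![0, -1; 1, 0] := by
  rw [Matrix.SpecialLinearGroup.map_apply_coe, coe_S]
  ext i j
  fin_cases i <;> fin_cases j <;> simp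

lemma exists_conj_cyclotomic {ζ : ℂ} (hζ : IsPrimitiveRoot ζ 5) :
    ∃ P : SL(2, ℂ),
      MulAut.conj P (Matrix.SpecialLinearGroup.map (cyclotomicEmbedding hζ) cyclotomicT) =
        vertexRotation hζ ∧
      MulAut.conj P (Matrix.SpecialLinearGroup.map (Int.castRingHom ℂ) S) = edgeHalfTurn hζ := by
  obtain ⟨a, ha⟩ := IsAlgClosed.exists_pow_nat_eq (ζ - ζ ^ 4) two_pos
  have hδ : (ζ - ζ ^ 4) * (ζ - ζ ^ 4)⁻¹ = 1 := mul_inv_cancel₀ (sub_pow_four_ne_zero hζ)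
  have hgolden : goldenRoot ζ * (ζ ^ 2 - ζ ^ 3) = ζ - ζ ^ 4 := by
    rw [goldenRoot]
    linear_combination ζ * hζ.pow_eq_one
  set q := (ζ - ζ ^ 4)⁻¹
  let P : SL(2, ℂ) := ⟨!![a, -goldenRoot ζ * (q * a); 0, q * a], by
    rw [det_fin_two_of]
    linear_combination q * ha + hδ⟩
  have hP : P.val = !![a, -goldenRoot ζ * (q * a); 0, q * a] := rfl
  refine ⟨P, ?_, ?_⟩ <;> rw [MulAut.conj_apply, mul_inv_eq_iff_eq_mul] <;> apply Subtype.ext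
  · rw [Matrix.SpecialLinearGroup.coe_mul, Matrix.SpecialLinearGroup.coe_mul, hP,
      coe_map_cyclotomicEmbedding_cyclotomicT, coe_vertexRotation, mul_fin_two, mul_fin_two]
    congrm !![?_, ?_; ?_, ?_]
    · ring
    · linear_combination -q * a * hgolden - a * hδ
    · ring
    · ring
  · rw [Matrix.SpecialLinearGroup.coe_mul, Matrix.SpecialLinearGroup.coe_mul, hP,
      coe_map_intCast_S, coe_edgeHalfTurn, Matrix.smul_mul, mul_fin_two,
      mul_fin_two, smul_of]
    simp only [smul_cons, smul_empty, smul_eq_mul]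
    congrm !![?_, ?_; ?_, ?_]
    · ring
    · linear_combination -a * goldenRoot_sq_add_one_mul hζ
    · ring
    · ring

lemma card_SL_two_zmod_five : Nat.card SL(2, ZMod 5) = 120 := by
  rw [Nat.card_eq_fintype_card]
  decide +kernel

lemma nonempty_unimodularStabilizer_edgeForm_mulEquiv :
    Nonempty (unimodularStabilizer edgeForm ≃* SL(2, ZMod 5)) := by
  have : Finite (unimodularStabilizer edgeForm) := finite_unimodularStabilizer_edgeForm
  have : Fact (Nat.Prime 5) := ⟨by norm_num⟩
  have hζ := Complex.isPrimitiveRoot_exp 5 (by norm_num)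
  obtain ⟨P, hT, hS⟩ := exists_conj_cyclotomic hζ
  let α := (MulAut.conj P).toMonoidHom.comp
    (Matrix.SpecialLinearGroup.map (n := Fin 2) (cyclotomicEmbedding hζ))
  have hα : Function.Injective α :=
    (MulAut.conj P).injective.comp
      (specialLinearGroup_map_injective (cyclotomicEmbedding_injective hζ))
  let Γ := (unimodularStabilizer edgeForm).comap α
  have hαT : α cyclotomicT = vertexRotation hζ := hT
  have hαS : α (Matrix.SpecialLinearGroup.map (Int.castRingHom _) S) = edgeHalfTurn hζ :=
    (congrArg (MulAut.conj P) (specialLinearGroup_map_map_intCast _ S)).trans hS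
  have hTΓ : cyclotomicT ∈ Γ := Subgroup.mem_comap.mpr (hαT ▸ vertexRotation_mem hζ)
  have hSΓ : Matrix.SpecialLinearGroup.map (Int.castRingHom _) S ∈ Γ :=
    Subgroup.mem_comap.mpr (hαS ▸ edgeHalfTurn_mem hζ)
  let β := (Matrix.SpecialLinearGroup.map (n := Fin 2) (cyclotomicReduction 5)).comp Γ.subtype
  have hβ : Function.Surjective β := by
    rw [← MonoidHom.range_eq_top, eq_top_iff, ← closure_map_S_T_eq_top, Subgroup.closure_le]
    rintro _ (rfl | rfl)
    · exact ⟨⟨_, hSΓ⟩, specialLinearGroup_map_map_intCast _ S⟩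
    · exact ⟨⟨_, hTΓ⟩, map_cyclotomicReduction_cyclotomicT⟩
  have hαΓ : Function.Injective (α.subgroupComap (unimodularStabilizer edgeForm)) :=
    fun A B h ↦ Subtype.ext (hα (congrArg Subtype.val h))
  exact nonempty_mulEquiv_of_injective_of_surjective hαΓ hβ
    (card_unimodularStabilizer_edgeForm_le.trans card_SL_two_zmod_five.ge)

end Reduction

theorem stmt6 :
    Nat.card (Lin G30) = 1800 ∧
    Nonempty (Lin G30 ≃*
      Multiplicative (ZMod 15) × Matrix.SpecialLinearGroup (Fin 2) (ZMod 5)) := by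
  obtain ⟨eΓ⟩ := nonempty_unimodularStabilizer_edgeForm_mulEquiv
  have hμ : Nat.card (rootsOfUnity 15 ℂ) = Nat.card (Multiplicative (ZMod 15)) :=
    (Complex.card_rootsOfUnity 15).trans (Nat.card_zmod 15).symm
  let eSplit := rootsOfUnityProdEquivFormStabilizer (m := 15) isHomogeneous_edgeForm (by decide)
    fun _ hA ↦ det_pow_eq_one_of_mem_formStabilizer_edgeForm hA
  have eLin := formStabilizerEquivLin (by norm_num) isHomogeneous_edgeForm
    hasNondegeneratePolars_edgeForm
  rw [cyclicCover_edgeForm] at eLin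
  let e := (eLin.symm.trans eSplit.symm).trans ((mulEquivOfCyclicCardEq hμ).prodCongr eΓ)
  refine ⟨?_, ⟨e⟩⟩
  rw [Nat.card_congr e.toEquiv, Nat.card_prod, ← hμ, Complex.card_rootsOfUnity,
    card_SL_two_zmod_five]
end
end
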